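/- arXiv:2107.05299 — 6 statements merged into one kernel-verified Lean document; each statement's English description precedes it below -/
import Mathlib

section
/- Let κ > 0 and define φ₀ : ℝ⁶ → ℝ by φ₀(x) = √κ · (1 + |x|²/24)⁻². Then φ₀ is smooth, positive and radial, and satisfies −Δφ₀ = κ^{-1/2} φ₀² on ℝ⁶. Consequently the pair (φ, ψ) = (φ₀, φ₀/√κ) satisfies the ground-state system −Δφ = φ·ψ and −κ·Δψ = φ² on ℝ⁶. -/
open MeasureTheory Real Filter

noncomputable section

/-- Six-dimensional Euclidean space. -/
abbrev E6 := EuclideanSpace ℝ (Fin 6)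

/-- Partial derivative of a complex-valued function in the `j`-th coordinate direction. -/
def pd (f : E6 → ℂ) (j : Fin 6) (x : E6) : ℂ := fderiv ℝ f x (EuclideanSpace.single j 1)

/-- Laplacian of a complex-valued function on `ℝ⁶`. -/
def lap (f : E6 → ℂ) (x : E6) : ℂ :=
  ∑ j : Fin 6, fderiv ℝ (fun y => pd f j y) x (EuclideanSpace.single j 1)

/-- Partial derivative of a real-valued function in the `j`-th coordinate direction. -/
def pdR (f : E6 → ℝ) (j : Fin 6) (x : E6) : ℝ := fderiv ℝ f x (EuclideanSpace.single j 1)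

/-- Laplacian of a real-valued function on `ℝ⁶`. -/
def lapR (f : E6 → ℝ) (x : E6) : ℝ :=
  ∑ j : Fin 6, fderiv ℝ (fun y => pdR f j y) x (EuclideanSpace.single j 1)

/-- `|∇f(x)|²`, the squared length of the gradient. -/
def gradNormSq (f : E6 → ℂ) (x : E6) : ℝ := ∑ j : Fin 6, ‖pd f j x‖ ^ 2

/-- Kinetic energy `H(u,v) = ∫|∇u|² + (κ/2)∫|∇v|²`. -/
def Hen (κ : ℝ) (u v : E6 → ℂ) : ℝ :=
  (∫ x : E6, gradNormSq u x) + (κ / 2) * ∫ x : E6, gradNormSq v x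

/-- Potential energy `R(u,v) = Re ∫ conj(v) u²`. -/
def Ren (u v : E6 → ℂ) : ℝ := (∫ x : E6, (starRingEnd ℂ) (v x) * (u x) ^ 2).re

/-- Energy `E(u,v) = H(u,v) − R(u,v)`. -/
def Een (κ : ℝ) (u v : E6 → ℂ) : ℝ := Hen κ u v - Ren u v

/-- Mass `M(u,v) = ∫|u|² + ∫|v|²`. -/
def Mass (u v : E6 → ℂ) : ℝ := (∫ x : E6, ‖u x‖ ^ 2) + ∫ x : E6, ‖v x‖ ^ 2

/-- `j`-th component of the momentum `P(u,v) = Im ∫ (conj(u)∇u + (1/2)conj(v)∇v)`. -/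
def Pmom (u v : E6 → ℂ) (j : Fin 6) : ℝ :=
  (∫ x : E6, (starRingEnd ℂ) (u x) * pd u j x
    + (1 / 2 : ℂ) * (starRingEnd ℂ) (v x) * pd v j x).im

/-- The explicit profile `φ₀(x) = √κ (1 + |x|²/24)⁻²`. -/
def phi0 (κ : ℝ) (x : E6) : ℝ := Real.sqrt κ * ((1 + ‖x‖ ^ 2 / 24) ^ 2)⁻¹

/-- First component of the ground state `W`. -/
def W1 (κ : ℝ) (x : E6) : ℂ := (phi0 κ x : ℂ)

/-- Second component of the ground state `W`, namely `φ₀/√κ`. -/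
def W2 (κ : ℝ) (x : E6) : ℂ := ((phi0 κ x / Real.sqrt κ : ℝ) : ℂ)

/-- A function is Schwartz: smooth with all seminorms `sup ‖x‖^k ‖D^n f‖` finite. -/
def IsSchwartz (f : E6 → ℂ) : Prop :=
  ContDiff ℝ (⊤ : ℕ∞) f ∧ ∀ k n : ℕ, ∃ C : ℝ, ∀ x : E6, ‖x‖ ^ k * ‖iteratedFDeriv ℝ n f x‖ ≤ C

/-- A classical solution of the quadratic NLS system
`i∂ₜu + Δu + v conj(u) = 0`, `i∂ₜv + κΔv + u² = 0` on a time set `I`,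
with Schwartz slices whose seminorms are bounded locally uniformly in `t`. -/
structure IsClassicalSol (κ : ℝ) (I : Set ℝ) (u v : ℝ → E6 → ℂ) : Prop where
  smooth : ContDiffOn ℝ (⊤ : ℕ∞) (fun p : ℝ × E6 => (u p.1 p.2, v p.1 p.2)) (I ×ˢ Set.univ)
  eqn_u : ∀ t ∈ I, ∀ x : E6,
    Complex.I * deriv (fun s => u s x) t + lap (u t) x
      + v t x * (starRingEnd ℂ) (u t x) = 0
  eqn_v : ∀ t ∈ I, ∀ x : E6,
    Complex.I * deriv (fun s => v s x) t + (κ : ℂ) * lap (v t) x + (u t x) ^ 2 = 0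
  schwartz_u : ∀ t ∈ I, IsSchwartz (u t)
  schwartz_v : ∀ t ∈ I, IsSchwartz (v t)
  bounds : ∀ K : Set ℝ, K ⊆ I → IsCompact K → ∀ k n : ℕ, ∃ C : ℝ, ∀ t ∈ K, ∀ x : E6,
    ‖x‖ ^ k * ‖iteratedFDeriv ℝ n (u t) x‖ ≤ C ∧ ‖x‖ ^ k * ‖iteratedFDeriv ℝ n (v t) x‖ ≤ C

/-!
Writing `w = 1 + a‖y‖²`, the radial formula for the Laplacian expresses `Δ (w ^ p)` through
`w ^ (p - 1)` and `w ^ (p - 2)`. In dimension `d` the first coefficient vanishes for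
`p = 1 - d / 2`, so `Δ (w ^ (1 - d / 2)) = -a d (d - 2) w ^ (-1 - d / 2)`, and
`a = 1 / (d (d - 2))` normalizes the constant. For `d = 6` this gives `-Δu = u²` with
`u = w⁻²` and `a = 1 / 24`, and `φ₀ = √κ u`.
-/

section RadialLaplacian

open Laplacian Module Topology

variable {E : Type*} [NormedAddCommGroup E] [InnerProductSpace ℝ E]

lemma fderiv_comp_norm_sq {g : ℝ → ℝ} {g' : ℝ} {x : E} (hg : HasDerivAt g g' (‖x‖ ^ 2)) :
    fderiv ℝ (fun y : E => g (‖y‖ ^ 2)) x = (2 * g') • innerSL ℝ x := by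
  have h := hg.comp_hasFDerivAt x (hasStrictFDerivAt_norm_sq x).hasFDerivAt
  rw [mul_comm, mul_smul, ofNat_smul_eq_nsmul]
  exact h.fderiv

lemma fderiv_fderiv_comp_norm_sq {g g' : ℝ → ℝ} {g'' : ℝ} {x : E}
    (hg : ∀ᶠ t in 𝓝 (‖x‖ ^ 2), HasDerivAt g (g' t) t) (hg' : HasDerivAt g' g'' (‖x‖ ^ 2))
    (v w : E) :
    fderiv ℝ (fderiv ℝ fun y : E => g (‖y‖ ^ 2)) x v w =
      4 * g'' * (inner ℝ x v * inner ℝ x w) + 2 * g' (‖x‖ ^ 2) * inner ℝ v w := by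
  let L : E →L[ℝ] E →L[ℝ] ℝ := innerSL ℝ
  have hL (v w : E) : L v w = inner ℝ v w := rfl
  have hnear : (fderiv ℝ fun y : E => g (‖y‖ ^ 2)) =ᶠ[𝓝 x]
      fun y => (2 * g' (‖y‖ ^ 2)) • L y := by
    have hcont : ContinuousAt (fun y : E => ‖y‖ ^ 2) x := by fun_prop
    filter_upwards [hcont.eventually hg] with y hy using fderiv_comp_norm_sq hy
  have hcoeff : HasFDerivAt (fun y : E => 2 * g' (‖y‖ ^ 2)) ((4 * g'') • L x) x := by
    have hcomp := hg'.comp_hasFDerivAt x (hasStrictFDerivAt_norm_sq x).hasFDerivAt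
    refine (hcomp.const_mul 2).congr_fderiv ?_
    ext v
    simp only [smul_apply, coe_innerSL_apply, nsmul_eq_mul, Nat.cast_ofNat, smul_eq_mul, hL]
    ring
  rw [hnear.fderiv_eq, (hcoeff.fun_smul L.hasFDerivAt).fderiv]
  simp only [add_apply, smul_apply, ContinuousLinearMap.smulRight_apply, hL, smul_eq_mul]
  ring

variable [FiniteDimensional ℝ E]

theorem laplacian_comp_norm_sq {g g' : ℝ → ℝ} {g'' : ℝ} {x : E}
    (hg : ∀ᶠ t in 𝓝 (‖x‖ ^ 2), HasDerivAt g (g' t) t) (hg' : HasDerivAt g' g'' (‖x‖ ^ 2)) :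
    Δ (fun y : E => g (‖y‖ ^ 2)) x =
      4 * g'' * ‖x‖ ^ 2 + 2 * g' (‖x‖ ^ 2) * finrank ℝ E := by
  let b := stdOrthonormalBasis ℝ E
  calc Δ (fun y : E => g (‖y‖ ^ 2)) x
      = ∑ i, fderiv ℝ (fderiv ℝ fun y : E => g (‖y‖ ^ 2)) x (b i) (b i) := by
        simp [InnerProductSpace.laplacian_eq_iteratedFDeriv_orthonormalBasis _ b,
          iteratedFDeriv_two_apply]
    _ = ∑ i, (4 * g'' * inner ℝ (b i) x ^ 2 + 2 * g' (‖x‖ ^ 2)) := by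
        simp only [fderiv_fderiv_comp_norm_sq hg hg', real_inner_self_eq_norm_sq, b.norm_eq_one,
          real_inner_comm x, one_pow, mul_one, sq (inner ℝ _ _)]
    _ = 4 * g'' * ‖x‖ ^ 2 + 2 * g' (‖x‖ ^ 2) * finrank ℝ E := by
        simp [Finset.sum_add_distrib, ← Finset.mul_sum, b.sum_sq_inner_right, mul_comm]

lemma hasDerivAt_one_add_mul_rpow {a t : ℝ} (p : ℝ) (ht : 1 + a * t ≠ 0) :
    HasDerivAt (fun s => (1 + a * s) ^ p) (a * p * (1 + a * t) ^ (p - 1)) t := by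
  simpa using (((hasDerivAt_id t).const_mul a).const_add 1).rpow_const (p := p) (.inl ht)

theorem laplacian_one_add_mul_norm_sq_rpow {a : ℝ} (p : ℝ) {x : E} (hx : 1 + a * ‖x‖ ^ 2 ≠ 0) :
    Δ (fun y : E => ((1 + a * ‖y‖ ^ 2) ^ p : ℝ)) x =
      2 * a * p * ((finrank ℝ E + 2 * (p - 1)) * (1 + a * ‖x‖ ^ 2) ^ (p - 1)
        - 2 * (p - 1) * (1 + a * ‖x‖ ^ 2) ^ (p - 2)) := by
  have hcont : ContinuousAt (fun t : ℝ => 1 + a * t) (‖x‖ ^ 2) := by fun_prop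
  have hfirst := (hcont.eventually_ne hx).mono fun _ => hasDerivAt_one_add_mul_rpow p
  have hsecond := (hasDerivAt_one_add_mul_rpow (p - 1) hx).const_mul (a * p)
  have hpow : (1 + a * ‖x‖ ^ 2) ^ (p - 1) =
      (1 + a * ‖x‖ ^ 2) ^ (p - 2) * (1 + a * ‖x‖ ^ 2) := by
    rw [← rpow_add_one hx]; ring_nf
  rw [laplacian_comp_norm_sq hfirst hsecond, sub_sub, one_add_one_eq_two, hpow]
  ring

end RadialLaplacian

section AubinTalentiBubble

open Laplacian Module

variable {E : Type*} [NormedAddCommGroup E] [InnerProductSpace ℝ E]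

/-- The Aubin–Talenti bubble `(1 + |x|² / (d (d - 2))) ^ (-(d - 2) / 2)` in dimension `d`, the
radial profile of the energy-critical ground states; it is meaningful for `2 < d`. -/
def aubinTalentiBubble (x : E) : ℝ :=
  (1 + (finrank ℝ E * (finrank ℝ E - 2) : ℝ)⁻¹ * ‖x‖ ^ 2) ^ (1 - finrank ℝ E / 2 : ℝ)

lemma aubinTalentiBubble_base_pos (hE : 2 < finrank ℝ E) (x : E) :
    0 < 1 + (finrank ℝ E * (finrank ℝ E - 2) : ℝ)⁻¹ * ‖x‖ ^ 2 := by
  have hd : (0 : ℝ) < finrank ℝ E - 2 := sub_pos.2 (mod_cast hE)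
  positivity

lemma aubinTalentiBubble_pos (hE : 2 < finrank ℝ E) (x : E) : 0 < aubinTalentiBubble x :=
  rpow_pos_of_pos (aubinTalentiBubble_base_pos hE x) _

lemma aubinTalentiBubble_eq_of_norm_eq {x y : E} (h : ‖x‖ = ‖y‖) :
    aubinTalentiBubble x = aubinTalentiBubble y := by
  simp only [aubinTalentiBubble, h]

lemma contDiff_aubinTalentiBubble {n : WithTop ℕ∞} (hE : 2 < finrank ℝ E) :
    ContDiff ℝ n (aubinTalentiBubble : E → ℝ) :=
  (contDiff_const.add (contDiff_const.mul (contDiff_norm_sq ℝ))).rpow_const_of_ne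
    fun x => (aubinTalentiBubble_base_pos hE x).ne'

theorem neg_laplacian_aubinTalentiBubble [FiniteDimensional ℝ E] (hE : 2 < finrank ℝ E) (x : E) :
    -Δ (aubinTalentiBubble : E → ℝ) x =
      aubinTalentiBubble x ^ ((finrank ℝ E + 2) / (finrank ℝ E - 2) : ℝ) := by
  have hw := aubinTalentiBubble_base_pos hE x
  unfold aubinTalentiBubble
  rw [laplacian_one_add_mul_norm_sq_rpow _ hw.ne', ← rpow_mul hw.le]
  have hd : (finrank ℝ E : ℝ) ≠ 0 := Nat.cast_ne_zero.2 (by lia)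
  have hd₂ : (finrank ℝ E - 2 : ℝ) ≠ 0 := sub_ne_zero.2 (mod_cast hE.ne')
  set d := (finrank ℝ E : ℝ)
  have hexp : (1 - d / 2) * ((d + 2) / (d - 2)) = 1 - d / 2 - 2 := by field_simp; ring
  have hcoeff : d + 2 * (1 - d / 2 - 1) = 0 := by ring
  rw [hexp, hcoeff, zero_mul, zero_sub]
  field_simp
  ring

end AubinTalentiBubble

section GroundState

open Laplacian Module

lemma two_lt_finrank_E6 : 2 < finrank ℝ E6 := by simp

lemma lapR_eq_laplacian {f : E6 → ℝ} {x : E6} (hf : ContDiffAt ℝ 2 f x) :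
    lapR f x = Δ f x := by
  have hdiff : DifferentiableAt ℝ (fderiv ℝ f) x :=
    (hf.fderiv_right (m := 1) le_rfl).differentiableAt one_ne_zero
  simp [lapR, pdR, fderiv_clm_apply hdiff (differentiableAt_const _), iteratedFDeriv_two_apply,
    InnerProductSpace.laplacian_eq_iteratedFDeriv_orthonormalBasis f
      (EuclideanSpace.basisFun (Fin 6) ℝ)]

lemma aubinTalentiBubble_E6 (x : E6) :
    aubinTalentiBubble x = ((1 + ‖x‖ ^ 2 / 24) ^ 2)⁻¹ := by
  have hw : 0 ≤ 1 + ‖x‖ ^ 2 / 24 := by positivity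
  rw [← rpow_two, ← rpow_neg hw, aubinTalentiBubble, finrank_euclideanSpace_fin]
  norm_num [div_eq_inv_mul]

lemma phi0_eq_mul (κ : ℝ) (x : E6) : phi0 κ x = √κ * aubinTalentiBubble x := by
  rw [phi0, aubinTalentiBubble_E6]

lemma phi0_eq_smul (κ : ℝ) : phi0 κ = √κ • aubinTalentiBubble :=
  funext (phi0_eq_mul κ)

lemma phi0_div_sqrt {κ : ℝ} (hκ : 0 < κ) (x : E6) : phi0 κ x / √κ = aubinTalentiBubble x := by
  rw [phi0_eq_mul, mul_div_cancel_left₀ _ (sqrt_pos.2 hκ).ne']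

lemma neg_lapR_aubinTalentiBubble (x : E6) :
    -lapR aubinTalentiBubble x = aubinTalentiBubble x ^ 2 := by
  rw [lapR_eq_laplacian (contDiff_aubinTalentiBubble two_lt_finrank_E6).contDiffAt,
    neg_laplacian_aubinTalentiBubble two_lt_finrank_E6, ← rpow_two, finrank_euclideanSpace_fin]
  norm_num

lemma contDiff_phi0 (κ : ℝ) {n : WithTop ℕ∞} : ContDiff ℝ n (phi0 κ) := by
  rw [phi0_eq_smul]
  exact (contDiff_aubinTalentiBubble two_lt_finrank_E6).const_smul (√κ)

lemma neg_lapR_phi0 (κ : ℝ) (x : E6) : -lapR (phi0 κ) x = √κ * aubinTalentiBubble x ^ 2 := by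
  have hu : ContDiffAt ℝ 2 aubinTalentiBubble x :=
    (contDiff_aubinTalentiBubble two_lt_finrank_E6).contDiffAt
  rw [lapR_eq_laplacian (contDiff_phi0 κ).contDiffAt, phi0_eq_smul,
    InnerProductSpace.laplacian_smul _ hu, ← lapR_eq_laplacian hu, smul_eq_mul, ← mul_neg,
    neg_lapR_aubinTalentiBubble]

end GroundState

/-- the explicit function `φ₀(x) = √κ (1 + |x|²/24)⁻²` is smooth, positive
and radial, satisfies `−Δφ₀ = κ^{-1/2} φ₀²`, and the pair `(φ₀, φ₀/√κ)` solves the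
ground-state system `−Δφ = φψ`, `−κΔψ = φ²` on `ℝ⁶`. -/
theorem explicit_ground_state (κ : ℝ) (hκ : 0 < κ) :
    ContDiff ℝ (⊤ : ℕ∞) (phi0 κ) ∧
    (∀ x : E6, 0 < phi0 κ x) ∧
    (∀ x y : E6, ‖x‖ = ‖y‖ → phi0 κ x = phi0 κ y) ∧
    (∀ x : E6, - lapR (phi0 κ) x = (Real.sqrt κ)⁻¹ * (phi0 κ x) ^ 2) ∧
    (∀ x : E6, - lapR (phi0 κ) x = phi0 κ x * (phi0 κ x / Real.sqrt κ)) ∧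
    (∀ x : E6, - (κ * lapR (fun y => phi0 κ y / Real.sqrt κ) x) = (phi0 κ x) ^ 2) := by
  have hsystem (x : E6) : -lapR (phi0 κ) x = phi0 κ x * (phi0 κ x / √κ) := by
    rw [neg_lapR_phi0, phi0_div_sqrt hκ, phi0_eq_mul, sq, mul_assoc]
  refine ⟨contDiff_phi0 κ, fun x => ?pos, fun x y hxy => ?radial, fun x => ?scalar, hsystem,
    fun x => ?second⟩
  case pos =>
    rw [phi0_eq_mul]
    exact mul_pos (sqrt_pos.2 hκ) (aubinTalentiBubble_pos two_lt_finrank_E6 x)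
  case radial => rw [phi0_eq_mul, phi0_eq_mul, aubinTalentiBubble_eq_of_norm_eq hxy]
  case scalar => rw [hsystem, sq, div_eq_inv_mul, mul_left_comm]
  case second =>
    simp only [phi0_div_sqrt hκ]
    rw [← mul_neg, neg_lapR_aubinTalentiBubble, phi0_eq_mul, mul_pow, sq_sqrt hκ.le]
end
end

section
/- For every κ > 0, the explicit ground state W = (φ₀, φ₀/√κ), φ₀(x) = √κ(1 + |x|²/24)⁻², satisfies the Pohozaev-type identity H(W) = (3/2)·R(W); consequently E(W) = (1/3)·H(W). Moreover H(W) > 0 and R(W) > 0. -/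
/-! The pair `W` solves the stationary system `Δu + v ū = 0`, `κ Δv + u² = 0`: for
`q = 1 + |x|² / a` one has `Δ q⁻ˢ = (4s / a) ((s - 2) q⁻ˢ⁻¹ - (s + 1) q⁻ˢ⁻²)` on `ℝ⁶`, and
`s = 2`, `a = 24` leaves `Δ q⁻² = -(q⁻²)²`. Pairing the two equations with `ū` and `v̄` and
integrating by parts gives `∫ |∇u|² = R(u, v)` and `κ ∫ |∇v|² = R(u, v)`, hence `H = R + R / 2`.
-/

open MeasureTheory Real Filter

noncomputable section

open scoped ComplexConjugate

section GreenIdentity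

variable {f : E6 → ℂ}

/-- Regularity and integrability under which Green's first identity `∫ |∇f|² = -∫ f̄ Δf` holds
on `ℝ⁶` without boundary terms. -/
structure GreenAdmissible (f : E6 → ℂ) : Prop where
  differentiable : Differentiable ℝ f
  differentiable_pd : ∀ j, Differentiable ℝ (pd f j)
  integrable_conj_mul_pd : ∀ j, Integrable fun x => conj (f x) * pd f j x
  integrable_norm_pd_sq : ∀ j, Integrable fun x => ‖pd f j x‖ ^ 2
  integrable_conj_mul_pd_pd : ∀ j, Integrable fun x => conj (f x) * pd (pd f j) j x

lemma pd_conj (f : E6 → ℂ) (j : Fin 6) (x : E6) :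
    pd (fun y => conj (f y)) j x = conj (pd f j x) := by
  unfold pd
  rw [show (fun y => conj (f y)) = fun y => star (f y) from rfl, fderiv_star]
  rfl

lemma pd_const_smul (c : ℂ) (f : E6 → ℂ) (j : Fin 6) : pd (c • f) j = c • pd f j := by
  ext x
  simp only [pd, fderiv_const_smul_field, Pi.smul_apply, smul_apply]

lemma lap_eq_sum_pd_pd (f : E6 → ℂ) (x : E6) : lap f x = ∑ j, pd (pd f j) j x := rfl

lemma lap_const_smul (c : ℂ) (f : E6 → ℂ) : lap (c • f) = c • lap f := by
  ext x
  simp only [lap_eq_sum_pd_pd, pd_const_smul, Pi.smul_apply, Finset.smul_sum]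

lemma GreenAdmissible.const_smul (hf : GreenAdmissible f) (c : ℂ) : GreenAdmissible (c • f) where
  differentiable := hf.differentiable.const_smul c
  differentiable_pd j := by
    rw [pd_const_smul]
    exact (hf.differentiable_pd j).const_smul c
  integrable_conj_mul_pd j := by
    simpa only [pd_const_smul, Pi.smul_apply, smul_eq_mul, map_mul, mul_mul_mul_comm] using
      (hf.integrable_conj_mul_pd j).const_mul (conj c * c)
  integrable_norm_pd_sq j := by
    simpa only [pd_const_smul, Pi.smul_apply, smul_eq_mul, norm_mul, mul_pow] using
      (hf.integrable_norm_pd_sq j).const_mul (‖c‖ ^ 2)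
  integrable_conj_mul_pd_pd j := by
    simpa only [pd_const_smul, Pi.smul_apply, smul_eq_mul, map_mul, mul_mul_mul_comm] using
      (hf.integrable_conj_mul_pd_pd j).const_mul (conj c * c)

lemma GreenAdmissible.integral_norm_pd_sq (hf : GreenAdmissible f) (j : Fin 6) :
    ((∫ x, ‖pd f j x‖ ^ 2 : ℝ) : ℂ) = -∫ x, conj (f x) * pd (pd f j) j x := by
  have conj_mul_pd (x : E6) :
      pd (fun y => conj (f y)) j x * pd f j x = ((‖pd f j x‖ ^ 2 : ℝ) : ℂ) := by
    rw [pd_conj, Complex.conj_mul', Complex.ofReal_pow]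
  have by_parts : ∫ x, conj (f x) * pd (pd f j) j x =
      -∫ x, pd (fun y => conj (f y)) j x * pd f j x :=
    integral_mul_fderiv_eq_neg_fderiv_mul_of_integrable
      ((hf.integrable_norm_pd_sq j).ofReal.congr (.of_forall fun x => (conj_mul_pd x).symm))
      (hf.integrable_conj_mul_pd_pd j) (hf.integrable_conj_mul_pd j)
      (fun x _ => (hf.differentiable x).star) (fun x _ => hf.differentiable_pd j x)
  rw [by_parts, neg_neg]
  simp_rw [conj_mul_pd]
  exact integral_complex_ofReal.symm

lemma GreenAdmissible.integral_gradNormSq (hf : GreenAdmissible f) :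
    ((∫ x, gradNormSq f x : ℝ) : ℂ) = -∫ x, conj (f x) * lap f x := by
  simp only [gradNormSq, lap_eq_sum_pd_pd, Finset.mul_sum]
  rw [integral_finsetSum _ fun j _ => hf.integrable_norm_pd_sq j,
    integral_finsetSum _ fun j _ => hf.integrable_conj_mul_pd_pd j, Complex.ofReal_sum,
    ← Finset.sum_neg_distrib]
  exact Finset.sum_congr rfl fun j _ => hf.integral_norm_pd_sq j

end GreenIdentity

section StationaryStates

variable {κ : ℝ} {u v : E6 → ℂ}

/-- Time-independent solutions of the quadratic NLS system. -/
structure IsStationaryPair (κ : ℝ) (u v : E6 → ℂ) : Prop where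
  eqn_u : ∀ x, lap u x + v x * conj (u x) = 0
  eqn_v : ∀ x, κ * lap v x + u x ^ 2 = 0

lemma IsStationaryPair.integral_gradNormSq_fst (h : IsStationaryPair κ u v)
    (hu : GreenAdmissible u) :
    ∫ x, gradNormSq u x = Ren u v := by
  have key : ((∫ x, gradNormSq u x : ℝ) : ℂ) = conj (∫ x, conj (v x) * u x ^ 2) := by
    rw [hu.integral_gradNormSq, ← integral_neg, ← integral_conj]
    congr with x
    rw [map_mul, map_pow, Complex.conj_conj]
    linear_combination -conj (u x) * h.eqn_u x
  simpa only [Ren, Complex.ofReal_re, Complex.conj_re] using congrArg Complex.re key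

lemma IsStationaryPair.integral_gradNormSq_snd (h : IsStationaryPair κ u v)
    (hv : GreenAdmissible v) :
    κ * ∫ x, gradNormSq v x = Ren u v := by
  have key : ((κ * ∫ x, gradNormSq v x : ℝ) : ℂ) = ∫ x, conj (v x) * u x ^ 2 := by
    rw [Complex.ofReal_mul, hv.integral_gradNormSq, ← integral_neg, ← integral_const_mul]
    congr with x
    linear_combination -conj (v x) * h.eqn_v x
  simpa only [Ren, Complex.ofReal_re] using congrArg Complex.re key

theorem IsStationaryPair.Hen_eq (h : IsStationaryPair κ u v) (hu : GreenAdmissible u)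
    (hv : GreenAdmissible v) : Hen κ u v = 3 / 2 * Ren u v := by
  unfold Hen
  linear_combination h.integral_gradNormSq_fst hu + 1 / 2 * h.integral_gradNormSq_snd hv

end StationaryStates

section Bubble

variable {E : Type*} [NormedAddCommGroup E] {a : ℝ}

/-- The Aubin–Talenti type profile `(1 + |x|² / a)⁻ˢ`. -/
def bubble (a s : ℝ) (x : E) : ℝ := (1 + ‖x‖ ^ 2 / a) ^ (-s)

lemma one_add_norm_sq_div_pos (ha : 0 < a) (x : E) : 0 < 1 + ‖x‖ ^ 2 / a := by positivity

lemma bubble_pos (ha : 0 < a) (s : ℝ) (x : E) : 0 < bubble a s x :=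
  rpow_pos_of_pos (one_add_norm_sq_div_pos ha x) _

lemma bubble_mul_bubble (ha : 0 < a) (s t : ℝ) (x : E) :
    bubble a s x * bubble a t x = bubble a (s + t) x := by
  rw [bubble, bubble, bubble, ← rpow_add (one_add_norm_sq_div_pos ha x), neg_add]

lemma norm_sq_div_mul_bubble (ha : 0 < a) (s : ℝ) (x : E) :
    ‖x‖ ^ 2 / a * bubble a (s + 1) x = bubble a s x - bubble a (s + 1) x := by
  have bubble_neg_one : bubble a (-1) x = 1 + ‖x‖ ^ 2 / a := by rw [bubble, neg_neg, rpow_one]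
  have h := bubble_mul_bubble ha (-1) (s + 1) x
  rw [bubble_neg_one, neg_add_cancel_comm_assoc] at h
  linear_combination h

lemma norm_pow_mul_bubble_le (ha : 0 < a) (n : ℕ) (s : ℝ) (x : E) :
    ‖x‖ ^ n * bubble a s x ≤ √a ^ n * bubble a (s - n / 2) x := by
  have norm_le : ‖x‖ ≤ √a * bubble a (-(1 / 2)) x := by
    rw [bubble, neg_neg, ← sqrt_eq_rpow, ← sqrt_mul ha.le]
    apply le_sqrt_of_sq_le
    field_simp
    linarith
  have bubble_pow : bubble a (-(1 / 2)) x ^ n = bubble a (-(n / 2)) x := by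
    rw [bubble, bubble, ← rpow_mul_natCast (one_add_norm_sq_div_pos ha x).le]
    ring_nf
  calc ‖x‖ ^ n * bubble a s x
      ≤ (√a * bubble a (-(1 / 2)) x) ^ n * bubble a s x :=
        mul_le_mul_of_nonneg_right (by gcongr) (bubble_pos ha s x).le
    _ = √a ^ n * bubble a (s - n / 2) x := by
        rw [mul_pow, bubble_pow, mul_assoc, bubble_mul_bubble ha, neg_add_eq_sub]

lemma continuous_bubble (ha : 0 < a) (s : ℝ) : Continuous (bubble a s : E → ℝ) :=
  Continuous.rpow_const (by fun_prop) fun x => .inl (one_add_norm_sq_div_pos ha x).ne'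

section Integrability

variable [NormedSpace ℝ E] [FiniteDimensional ℝ E] [MeasurableSpace E] [BorelSpace E]
  {μ : Measure E} [μ.IsAddHaarMeasure] {s : ℝ}

lemma integrable_bubble (ha : 0 < a) (hs : Module.finrank ℝ E < 2 * s) :
    Integrable (bubble a s : E → ℝ) μ := by
  have h := (integrable_rpow_neg_one_add_norm_sq (μ := μ) hs).comp_smul
    (inv_ne_zero (sqrt_pos.2 ha).ne')
  refine h.congr (.of_forall fun x => ?_)
  simp only [bubble, norm_smul, mul_pow, norm_inv, norm_eq_abs, inv_pow, sq_abs, sq_sqrt ha.le]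
  ring_nf

lemma integrable_pow_mul_bubble (ha : 0 < a) (ℓ : E →L[ℝ] ℝ) (n : ℕ)
    (hs : Module.finrank ℝ E + n < 2 * s) : Integrable (fun x => ℓ x ^ n * bubble a s x) μ := by
  have hdecay : Module.finrank ℝ E < 2 * (s - n / 2) := by linarith
  refine ((integrable_bubble ha hdecay).const_mul (‖ℓ‖ ^ n * √a ^ n)).mono'
    (((ℓ.continuous.pow n).mul (continuous_bubble ha s)).aestronglyMeasurable)
    (.of_forall fun x => ?_)
  calc ‖ℓ x ^ n * bubble a s x‖ = ‖ℓ x‖ ^ n * bubble a s x := by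
        rw [norm_mul, norm_pow, norm_of_nonneg (bubble_pos ha s x).le]
    _ ≤ (‖ℓ‖ * ‖x‖) ^ n * bubble a s x :=
        mul_le_mul_of_nonneg_right (by gcongr; exact ℓ.le_opNorm x) (bubble_pos ha s x).le
    _ = ‖ℓ‖ ^ n * (‖x‖ ^ n * bubble a s x) := by ring
    _ ≤ ‖ℓ‖ ^ n * (√a ^ n * bubble a (s - n / 2) x) := by
        gcongr ‖ℓ‖ ^ n * ?_
        exact norm_pow_mul_bubble_le ha n s x
    _ = ‖ℓ‖ ^ n * √a ^ n * bubble a (s - n / 2) x := by ring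

end Integrability

lemma hasFDerivAt_bubble [InnerProductSpace ℝ E] (ha : 0 < a) (s : ℝ) (x : E) :
    HasFDerivAt (bubble a s) ((-(2 * s / a) * bubble a (s + 1) x) • innerSL ℝ x) x := by
  have hq : HasFDerivAt (fun y : E => 1 + ‖y‖ ^ 2 / a) ((2 / a) • innerSL ℝ x) x := by
    refine (((hasStrictFDerivAt_norm_sq x).hasFDerivAt.mul_const a⁻¹).const_add 1).congr_fderiv ?_
    ext y
    simp only [smul_apply, smul_eq_mul, nsmul_eq_mul]
    push_cast
    ring
  refine (hq.rpow_const (p := -s) (.inl (one_add_norm_sq_div_pos ha x).ne')).congr_fderiv ?_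
  rw [smul_smul, bubble, neg_add']
  congr 1
  ring

lemma differentiable_bubble [InnerProductSpace ℝ E] (ha : 0 < a) (s : ℝ) :
    Differentiable ℝ (bubble a s : E → ℝ) :=
  fun x => (hasFDerivAt_bubble ha s x).differentiableAt

end Bubble

section BubbleDerivatives

variable {a s : ℝ} {f : E6 → ℝ}

lemma pdR_bubble (ha : 0 < a) (s : ℝ) (j : Fin 6) :
    pdR (bubble a s) j = fun x => -(2 * s / a) * (x j * bubble a (s + 1) x) := by
  ext x
  rw [pdR, (hasFDerivAt_bubble ha s x).fderiv]
  simp only [smul_apply, innerSL_apply_apply, EuclideanSpace.inner_single_right, smul_eq_mul,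
    conj_trivial, one_mul]
  ring

lemma differentiable_pdR_bubble (ha : 0 < a) (s : ℝ) (j : Fin 6) :
    Differentiable ℝ (pdR (bubble a s) j) := by
  have := differentiable_bubble (E := E6) ha (s + 1)
  rw [pdR_bubble ha]
  fun_prop

lemma pdR_pdR_bubble (ha : 0 < a) (s : ℝ) (j : Fin 6) (x : E6) :
    pdR (pdR (bubble a s) j) j x = -(2 * s / a) *
      (bubble a (s + 1) x - 2 * (s + 1) / a * (x j ^ 2 * bubble a (s + 2) x)) := by
  have hcoord : HasFDerivAt (fun y : E6 => y j) (EuclideanSpace.proj (𝕜 := ℝ) j) x :=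
    (EuclideanSpace.proj (𝕜 := ℝ) j).hasFDerivAt
  rw [pdR_bubble ha, pdR,
    ((hcoord.fun_mul (hasFDerivAt_bubble ha (s + 1) x)).const_mul (-(2 * s / a))).fderiv,
    add_assoc, one_add_one_eq_two]
  simp only [smul_apply, add_apply, innerSL_apply_apply, EuclideanSpace.inner_single_right,
    smul_eq_mul, conj_trivial, one_mul, mul_one, PiLp.proj_apply, PiLp.single_eq_same]
  ring

lemma lapR_eq_sum_pdR_pdR (f : E6 → ℝ) (x : E6) : lapR f x = ∑ j, pdR (pdR f j) j x := rfl

lemma lapR_bubble (ha : 0 < a) (s : ℝ) (x : E6) :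
    lapR (bubble a s) x =
      4 * s / a * ((s - 2) * bubble a (s + 1) x - (s + 1) * bubble a (s + 2) x) := by
  have hnorm := norm_sq_div_mul_bubble ha (s + 1) x
  rw [add_assoc, one_add_one_eq_two] at hnorm
  simp only [lapR_eq_sum_pdR_pdR, pdR_pdR_bubble ha, ← Finset.mul_sum, Finset.sum_sub_distrib,
    ← Finset.sum_mul, ← EuclideanSpace.real_norm_sq_eq, Finset.sum_const, Finset.card_univ,
    Fintype.card_fin, nsmul_eq_mul]
  push_cast
  linear_combination 4 * s * (s + 1) / a * hnorm

lemma pd_ofReal (hf : Differentiable ℝ f) (j : Fin 6) :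
    pd (fun x => (f x : ℂ)) j = fun x => (pdR f j x : ℂ) := by
  ext x
  exact congrArg (· (EuclideanSpace.single j 1))
    (Complex.ofRealCLM.hasFDerivAt.comp x (hf x).hasFDerivAt).fderiv

lemma lap_ofReal (hf : Differentiable ℝ f) (hf' : ∀ j, Differentiable ℝ (pdR f j)) (x : E6) :
    lap (fun x => (f x : ℂ)) x = (lapR f x : ℂ) := by
  simp only [lap_eq_sum_pd_pd, pd_ofReal hf, pd_ofReal (hf' _), lapR_eq_sum_pdR_pdR,
    Complex.ofReal_sum]

lemma greenAdmissible_ofReal (hf : Differentiable ℝ f) (hf' : ∀ j, Differentiable ℝ (pdR f j))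
    (hmul : ∀ j, Integrable fun x => f x * pdR f j x)
    (hsq : ∀ j, Integrable fun x => pdR f j x ^ 2)
    (hmul' : ∀ j, Integrable fun x => f x * pdR (pdR f j) j x) :
    GreenAdmissible fun x => (f x : ℂ) where
  differentiable := Complex.ofRealCLM.differentiable.comp hf
  differentiable_pd j := by
    rw [pd_ofReal hf]
    exact Complex.ofRealCLM.differentiable.comp (hf' j)
  integrable_conj_mul_pd j := by
    simp only [pd_ofReal hf, Complex.conj_ofReal, ← Complex.ofReal_mul]
    exact (hmul j).ofReal
  integrable_norm_pd_sq j := by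
    simpa only [pd_ofReal hf, Complex.norm_real, norm_eq_abs, sq_abs] using hsq j
  integrable_conj_mul_pd_pd j := by
    simp only [pd_ofReal hf, pd_ofReal (hf' j), Complex.conj_ofReal, ← Complex.ofReal_mul]
    exact (hmul' j).ofReal

-- The slowest decay is that of `f̄ ∇f`, of order `|x| ^ (-4 * s - 1)`: hence `4 * s + 1 > 6`.
lemma greenAdmissible_bubble (ha : 0 < a) (hs : 5 < 4 * s) :
    GreenAdmissible fun x => (bubble a s x : ℂ) := by
  have hint (n : ℕ) (t : ℝ) (ht : 6 + n < 2 * t) (j : Fin 6) :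
      Integrable fun x : E6 => x j ^ n * bubble a t x :=
    integrable_pow_mul_bubble ha (EuclideanSpace.proj j) n (by simpa using ht)
  refine greenAdmissible_ofReal (differentiable_bubble ha s) (differentiable_pdR_bubble ha s)
    (fun j => ?_) (fun j => ?_) (fun j => ?_)
  · refine ((hint 1 (s + (s + 1)) (by push_cast; linarith) j).const_mul (-(2 * s / a))).congr
      (.of_forall fun x => ?_)
    simp only [pdR_bubble ha, ← bubble_mul_bubble ha s (s + 1) x]
    ring
  · refine ((hint 2 ((s + 1) + (s + 1)) (by push_cast; linarith) j).const_mul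
      ((2 * s / a) ^ 2)).congr (.of_forall fun x => ?_)
    simp only [pdR_bubble ha, ← bubble_mul_bubble ha (s + 1) (s + 1) x]
    ring
  · refine (((hint 0 (s + (s + 1)) (by push_cast; linarith) j).sub
      ((hint 2 (s + (s + 2)) (by push_cast; linarith) j).const_mul (2 * (s + 1) / a))).const_mul
      (-(2 * s / a))).congr (.of_forall fun x => ?_)
    simp only [pdR_pdR_bubble ha, Pi.sub_apply, ← bubble_mul_bubble ha s (s + 1) x,
      ← bubble_mul_bubble ha s (s + 2) x]
    ring

end BubbleDerivatives

section GroundState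

variable {κ : ℝ}

lemma phi0_eq_sqrt_mul_bubble (κ : ℝ) (x : E6) : phi0 κ x = √κ * bubble 24 2 x := by
  rw [phi0, bubble, rpow_neg (one_add_norm_sq_div_pos (by norm_num) x).le, rpow_two]

lemma W1_eq_smul_bubble (κ : ℝ) : W1 κ = (√κ : ℂ) • fun x => (bubble 24 2 x : ℂ) := by
  ext x
  simp only [W1, phi0_eq_sqrt_mul_bubble, Complex.ofReal_mul, Pi.smul_apply, smul_eq_mul]

lemma W2_eq_bubble (hκ : 0 < κ) : W2 κ = fun x => (bubble 24 2 x : ℂ) := by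
  ext x
  rw [W2, phi0_eq_sqrt_mul_bubble, mul_div_cancel_left₀ _ (sqrt_pos.2 hκ).ne']

lemma lap_bubble_two (x : E6) :
    lap (fun x => (bubble 24 2 x : ℂ)) x = -(bubble 24 2 x : ℂ) ^ 2 := by
  have ha : (0 : ℝ) < 24 := by norm_num
  rw [lap_ofReal (differentiable_bubble ha 2) (differentiable_pdR_bubble ha 2), lapR_bubble ha,
    ← bubble_mul_bubble ha 2 2]
  push_cast
  ring

lemma isStationaryPair_groundState (hκ : 0 < κ) : IsStationaryPair κ (W1 κ) (W2 κ) := by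
  have sqrt_sq : (√κ : ℂ) ^ 2 = κ := by rw [← Complex.ofReal_pow, sq_sqrt hκ.le]
  constructor <;> intro x <;>
    simp only [W1_eq_smul_bubble, W2_eq_bubble hκ, lap_const_smul, Pi.smul_apply, smul_eq_mul,
      lap_bubble_two, map_mul, Complex.conj_ofReal]
  · ring
  · linear_combination (bubble 24 2 x : ℂ) ^ 2 * sqrt_sq

lemma Ren_groundState (hκ : 0 < κ) : Ren (W1 κ) (W2 κ) = κ * ∫ x : E6, bubble 24 6 x := by
  have integrand (x : E6) :
      conj (W2 κ x) * W1 κ x ^ 2 = ((κ * bubble 24 6 x : ℝ) : ℂ) := by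
    have bubble_six : bubble 24 6 x = bubble 24 2 x ^ 3 := by
      rw [pow_succ, sq, bubble_mul_bubble, bubble_mul_bubble] <;> norm_num
    rw [W1_eq_smul_bubble, W2_eq_bubble hκ, bubble_six]
    nth_rewrite 2 [← sq_sqrt hκ.le]
    simp only [Pi.smul_apply, smul_eq_mul, Complex.conj_ofReal]
    push_cast
    ring
  simp_rw [Ren, integrand]
  rw [integral_complex_ofReal, Complex.ofReal_re, integral_const_mul]

lemma Ren_groundState_pos (hκ : 0 < κ) : 0 < Ren (W1 κ) (W2 κ) := by
  have ha : (0 : ℝ) < 24 := by norm_num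
  rw [Ren_groundState hκ]
  refine mul_pos hκ (integral_pos_of_integrable_nonneg_nonzero (x := 0)
    (continuous_bubble ha 6) (integrable_bubble ha ?_) (fun x => (bubble_pos ha 6 x).le)
    (bubble_pos ha 6 0).ne')
  norm_num [finrank_euclideanSpace_fin]

end GroundState

/-- the explicit ground state `W = (φ₀, φ₀/√κ)` satisfies the Pohozaev-type
identity `H(W) = (3/2)R(W)`, hence `E(W) = (1/3)H(W)`; moreover `H(W) > 0` and `R(W) > 0`. -/
theorem ground_state_pohozaev (κ : ℝ) (hκ : 0 < κ) :
    Hen κ (W1 κ) (W2 κ) = (3 / 2) * Ren (W1 κ) (W2 κ) ∧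
    Een κ (W1 κ) (W2 κ) = (1 / 3) * Hen κ (W1 κ) (W2 κ) ∧
    0 < Hen κ (W1 κ) (W2 κ) ∧
    0 < Ren (W1 κ) (W2 κ) := by
  have hadm : GreenAdmissible fun x => (bubble 24 2 x : ℂ) :=
    greenAdmissible_bubble (by norm_num) (by norm_num)
  have hW1 : GreenAdmissible (W1 κ) := W1_eq_smul_bubble κ ▸ hadm.const_smul _
  have hW2 : GreenAdmissible (W2 κ) := W2_eq_bubble hκ ▸ hadm
  have pohozaev := (isStationaryPair_groundState hκ).Hen_eq hW1 hW2
  have hR := Ren_groundState_pos hκ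
  refine ⟨pohozaev, ?_, by rw [pohozaev]; positivity, hR⟩
  rw [Een, pohozaev]
  ring
end
end

section
/- Let d ≥ 1. A set F ⊆ L²(ℝ^d; ℂ) has compact closure in L²(ℝ^d) if and only if the following two conditions hold: (i) there exists A > 0 such that ‖f‖_{L²} ≤ A for all f ∈ F; and (ii) for every ε > 0 there exists R = R(ε) > 0 such that ∫_{|x| ≥ R} |f(x)|² dx + ∫_{|ξ| ≥ R} |f̂(ξ)|² dξ < ε for all f ∈ F. -/
open MeasureTheory Real

noncomputable section

/-!
Let `P_R` be multiplication by the indicator function of the ball of radius `R`. The tail condition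
says that `P_R f` and `P_R T f` are close to `f` and `T f`, uniformly on `F`.

* The operators `1 - P_R` are uniformly bounded and tend to `0` strongly, hence uniformly on totally
  bounded sets; apply this to `F` and to its image `T F`.
* Conversely, `P_R T P_R` is a compact operator: the Fourier integral of a function supported in the
  ball is Lipschitz, so the Arzelà–Ascoli theorem applies on the ball of radius `R` in frequency.
  The tail condition makes `T` a uniform limit of these operators on the bounded set `F`, so `T F`
  is totally bounded, and so is `F`.
-/

open Filter Metric Set Topology
open scoped BoundedContinuousFunction ENNReal FourierTransform

lemma isCompact_closure_iff_totallyBounded {α : Type*} [UniformSpace α] [CompleteSpace α]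
    {s : Set α} : IsCompact (closure s) ↔ TotallyBounded s :=
  ⟨fun h ↦ h.totallyBounded.subset subset_closure,
    fun h ↦ h.closure.isCompact_of_isClosed isClosed_closure⟩

section CompactOperators

variable {𝕜 E F G X : Type*} [NontriviallyNormedField 𝕜]
  [NormedAddCommGroup E] [NormedSpace 𝕜 E] [NormedAddCommGroup F] [NormedSpace 𝕜 F]
  [NormedAddCommGroup G] [NormedSpace 𝕜 G]

lemma eventually_forall_norm_lt_of_totallyBounded {ι : Type*} {l : Filter ι}
    {A : ι → E →L[𝕜] F} {C : ℝ} (hC : ∀ i, ‖A i‖ ≤ C) (hA : ∀ x, Tendsto (A · x) l (𝓝 0))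
    {s : Set E} (hs : TotallyBounded s) {ε : ℝ} (hε : 0 < ε) :
    ∀ᶠ i in l, ∀ x ∈ s, ‖A i x‖ < ε := by
  obtain ⟨δ, hδ, hCδ⟩ : ∃ δ > 0, C * δ < ε / 2 := exists_pos_mul_lt (half_pos hε) C
  obtain ⟨t, ht, hst⟩ := Metric.totallyBounded_iff.1 hs δ hδ
  have small_on_net : ∀ᶠ i in l, ∀ y ∈ t, ‖A i y‖ < ε / 2 :=
    (eventually_all_finite ht).2 fun y _ ↦ by
      simpa using (hA y).norm.eventually_lt_const (by simpa using half_pos hε)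
  filter_upwards [small_on_net] with i hi x hx
  obtain ⟨y, hy, hxy⟩ := mem_iUnion₂.1 (hst hx)
  calc ‖A i x‖ = ‖A i (x - y) + A i y‖ := by rw [map_sub, sub_add_cancel]
    _ ≤ C * ‖x - y‖ + ‖A i y‖ := (norm_add_le _ _).trans <| by
        gcongr; exact (A i).le_of_opNorm_le (hC i) _
    _ ≤ C * δ + ‖A i y‖ := by
        have hC₀ : 0 ≤ C := (norm_nonneg _).trans (hC i)
        gcongr; exact (mem_ball_iff_norm.1 hxy).le
    _ < ε := by linarith [hi y hy]

lemma totallyBounded_of_forall_exists_dist_lt {α : Type*} [PseudoMetricSpace α] {s : Set α}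
    (h : ∀ ε > 0, ∃ t, TotallyBounded t ∧ ∀ x ∈ s, ∃ y ∈ t, dist x y < ε) : TotallyBounded s := by
  refine Metric.totallyBounded_iff.2 fun ε hε ↦ ?_
  obtain ⟨t, ht, hst⟩ := h (ε / 2) (half_pos hε)
  obtain ⟨u, hu, htu⟩ := Metric.totallyBounded_iff.1 ht (ε / 2) (half_pos hε)
  refine ⟨u, hu, fun x hx ↦ ?_⟩
  obtain ⟨y, hy, hxy⟩ := hst x hx
  obtain ⟨z, hz, hyz⟩ := mem_iUnion₂.1 (htu hy)
  exact mem_iUnion₂.2 ⟨z, hz, mem_ball.2 <| by linarith [dist_triangle x y z, mem_ball.1 hyz]⟩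

lemma totallyBounded_image_of_forall_exists_isCompactOperator {s : Set E}
    (hs : Bornology.IsBounded s) (A : E → F)
    (h : ∀ ε > 0, ∃ K : E →L[𝕜] F, IsCompactOperator K ∧ ∀ x ∈ s, ‖A x - K x‖ < ε) :
    TotallyBounded (A '' s) := by
  refine totallyBounded_of_forall_exists_dist_lt fun ε hε ↦ ?_
  obtain ⟨K, hK, hAK⟩ := h ε hε
  refine ⟨K '' s, ?_, ?_⟩
  · exact (IsCompactOperator.isCompact_closure_image_of_bounded (f := K.toLinearMap) hK
      hs).totallyBounded.subset subset_closure
  · rintro _ ⟨x, hx, rfl⟩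
    exact ⟨K x, mem_image_of_mem K hx, by simpa only [dist_eq_norm] using hAK x hx⟩

lemma totallyBounded_image_of_dist_le {α β γ : Type*} [PseudoMetricSpace β] [PseudoMetricSpace γ]
    {Φ : α → β} {Ψ : α → γ} {s : Set α} {C : ℝ} (hΦ : TotallyBounded (Φ '' s))
    (hC : ∀ x ∈ s, ∀ y ∈ s, dist (Ψ x) (Ψ y) ≤ C * dist (Φ x) (Φ y)) :
    TotallyBounded (Ψ '' s) := by
  refine Metric.totallyBounded_iff.2 fun ε hε ↦ ?_
  obtain ⟨δ, hδ, hCδ⟩ : ∃ δ > 0, max C 0 * δ < ε := exists_pos_mul_lt hε _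
  obtain ⟨t, hts, ht, hst⟩ :=
    exists_subset_image_finite_and.1 (finite_approx_of_totallyBounded hΦ δ hδ)
  refine ⟨Ψ '' t, ht.image Ψ, ?_⟩
  rintro _ ⟨x, hx, rfl⟩
  obtain ⟨_, ⟨y, hy, rfl⟩, hxy⟩ := mem_iUnion₂.1 (hst (mem_image_of_mem Φ hx))
  refine mem_iUnion₂.2 ⟨Ψ y, mem_image_of_mem Ψ hy, mem_ball.2 ?_⟩
  calc dist (Ψ x) (Ψ y) ≤ C * dist (Φ x) (Φ y) := hC x hx y (hts hy)
    _ ≤ max C 0 * δ := by gcongr; exacts [le_max_left _ _, (mem_ball.1 hxy).le]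
    _ < ε := hCδ

lemma isCompactOperator_of_forall_norm_le [CompleteSpace F] {K : E →L[𝕜] F} {Φ : E →L[𝕜] G}
    (hΦ : IsCompactOperator Φ) {C : ℝ} (hK : ∀ x, ‖K x‖ ≤ C * ‖Φ x‖) : IsCompactOperator K := by
  refine (isCompactOperator_iff_isCompact_closure_image_closedBall K.toLinearMap one_pos).2 ?_
  refine isCompact_closure_iff_totallyBounded.2 ?_
  have hΦ_ball : TotallyBounded (Φ '' closedBall 0 1) :=
    (IsCompactOperator.isCompact_closure_image_closedBall (f := Φ.toLinearMap) hΦ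
      1).totallyBounded.subset subset_closure
  refine totallyBounded_image_of_dist_le (C := C) hΦ_ball fun x _ y _ ↦ ?_
  simpa only [dist_eq_norm, ContinuousLinearMap.coe_coe, map_sub] using hK (x - y)

lemma isCompactOperator_of_equicontinuous [TopologicalSpace X] [CompactSpace X] [ProperSpace F]
    {Φ : E →L[𝕜] X →ᵇ F}
    (hΦ : Equicontinuous ((↑) : Φ '' closedBall 0 1 → X → F)) : IsCompactOperator Φ := by
  refine (isCompactOperator_iff_isCompact_closure_image_closedBall Φ.toLinearMap one_pos).2 ?_
  refine BoundedContinuousFunction.arzela_ascoli (closedBall 0 ‖Φ‖) (isCompact_closedBall _ _) _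
    ?_ hΦ
  rintro _ x ⟨f, hf, rfl⟩
  rw [mem_closedBall_zero_iff] at hf ⊢
  exact ((Φ f).norm_coe_le_norm x).trans (Φ.unit_le_opNorm f hf)

end CompactOperators

section Truncation

variable {α E : Type*} [MeasurableSpace α] {μ : Measure α} [NormedAddCommGroup E]

lemma Lp_norm_sq_eq_integral (f : Lp E 2 μ) : ‖f‖ ^ 2 = ∫ x, ‖f x‖ ^ 2 ∂μ := by
  rw [Lp.norm_def, (Lp.memLp f).eLpNorm_eq_integral_rpow_norm two_ne_zero ENNReal.ofNat_ne_top,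
    ENNReal.toReal_ofReal (by positivity), ← Real.rpow_natCast, ← Real.rpow_mul (by positivity)]
  simp

variable (𝕜 : Type*) [NontriviallyNormedField 𝕜] [NormedSpace 𝕜 E] {s : Set α}

section Holder

variable (r p q : ℝ≥0∞) [ENNReal.HolderTriple r p q] [Fact (1 ≤ r)] [Fact (1 ≤ p)] [Fact (1 ≤ q)]

/-- Multiplication by the indicator function of `s`, as a bounded operator `L^p → L^q` where
`1 / q = 1 / r + 1 / p`: Hölder's inequality against `1_s ∈ L^r`. -/
def truncation (hs : MeasurableSet s) (hμs : μ s ≠ ∞) : Lp E p μ →L[𝕜] Lp E q μ :=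
  (ContinuousLinearMap.lsmul 𝕜 𝕜).holderL μ r p q (indicatorConstLp r hs hμs 1)

lemma coeFn_truncation (hs : MeasurableSet s) (hμs : μ s ≠ ∞) (f : Lp E p μ) :
    truncation 𝕜 r p q hs hμs f =ᵐ[μ] s.indicator f := by
  set χ : Lp 𝕜 r μ := indicatorConstLp r hs hμs 1
  filter_upwards [(ContinuousLinearMap.lsmul 𝕜 𝕜).coeFn_holder (r := q) χ f,
    indicatorConstLp_coeFn (p := r) (hs := hs) (hμs := hμs) (c := (1 : 𝕜))] with x hχf hχ
  rw [truncation, ContinuousLinearMap.holderL_apply_apply, hχf, hχ]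
  by_cases hx : x ∈ s <;> simp [hx]

lemma norm_truncation_le_of_ae_bound (hs : MeasurableSet s) (hμs : μ s ≠ ∞) {f : Lp E p μ} {C : ℝ}
    (hC : 0 ≤ C) (hfC : ∀ᵐ x ∂μ, x ∈ s → ‖f x‖ ≤ C) :
    ‖truncation 𝕜 r p q hs hμs f‖ ≤ C * μ.real s ^ (1 / q.toReal) := by
  refine le_trans (Lp.norm_le_norm_of_ae_le (g := indicatorConstLp q hs hμs C) ?_)
    (norm_indicatorConstLp_le.trans_eq (by rw [Real.norm_of_nonneg hC]))
  filter_upwards [coeFn_truncation 𝕜 r p q hs hμs f,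
    indicatorConstLp_coeFn (p := q) (hs := hs) (hμs := hμs) (c := C), hfC] with x hf hχ hx
  rw [hf, hχ]
  by_cases h : x ∈ s
  · simpa [h, abs_of_nonneg hC] using hx h
  · simp [h]

end Holder

lemma norm_truncation_le (p : ℝ≥0∞) [Fact (1 ≤ p)] (hs : MeasurableSet s) (hμs : μ s ≠ ∞)
    (f : Lp E p μ) : ‖truncation 𝕜 ∞ p p hs hμs f‖ ≤ ‖f‖ := by
  refine Lp.norm_le_norm_of_ae_le ?_
  filter_upwards [coeFn_truncation 𝕜 ∞ p p hs hμs f] with x hx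
  exact hx ▸ norm_indicator_le_norm_self _ _

lemma norm_sub_truncation_sq (hs : MeasurableSet s) (hμs : μ s ≠ ∞) (f : Lp E 2 μ) :
    ‖f - truncation 𝕜 ∞ 2 2 hs hμs f‖ ^ 2 = ∫ x in sᶜ, ‖f x‖ ^ 2 ∂μ := by
  rw [Lp_norm_sq_eq_integral, ← integral_indicator hs.compl]
  refine integral_congr_ae ?_
  filter_upwards [Lp.coeFn_sub f (truncation 𝕜 ∞ 2 2 hs hμs f),
    coeFn_truncation 𝕜 ∞ 2 2 hs hμs f] with x hsub hx
  rw [hsub, Pi.sub_apply, hx]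
  by_cases h : x ∈ s <;> simp [h]

end Truncation

section Tails

variable {V E : Type*} [NormedAddCommGroup V] [MeasurableSpace V]
  [OpensMeasurableSpace V] {μ : Measure V} [NormedAddCommGroup E] [NormedSpace ℝ E]

lemma tendsto_setIntegral_le_norm_atTop {f : V → E} (hf : Integrable f μ) :
    Tendsto (fun R : ℝ ↦ ∫ x in {x | R ≤ ‖x‖}, f x ∂μ) atTop (𝓝 0) := by
  have h_inter : ⋂ R : ℝ, {x : V | R ≤ ‖x‖} = ∅ :=
    iInter_eq_empty_iff.2 fun x ↦ ⟨‖x‖ + 1, by simp⟩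
  simpa [h_inter] using tendsto_setIntegral_of_antitone (s := fun R : ℝ ↦ {x : V | R ≤ ‖x‖})
    (fun R ↦ measurableSet_le measurable_const measurable_norm)
    (fun _ _ hRS _ hx ↦ hRS.trans hx) ⟨0, hf.integrableOn⟩

end Tails

section Fourier

variable {V E : Type*} [NormedAddCommGroup V] [InnerProductSpace ℝ V] [FiniteDimensional ℝ V]
  [MeasurableSpace V] [BorelSpace V] [NormedAddCommGroup E] [NormedSpace ℂ E]

lemma norm_fourier_sub_le {f : V → E} (hf : Integrable f) (hvf : Integrable fun v ↦ ‖v‖ * ‖f v‖)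
    (x y : V) : ‖𝓕 f x - 𝓕 f y‖ ≤ 2 * π * (∫ v, ‖v‖ * ‖f v‖) * ‖x - y‖ := by
  refine convex_univ.norm_image_sub_le_of_norm_fderiv_le (𝕜 := ℝ)
    (fun z _ ↦ (Real.hasFDerivAt_fourier hf hvf z).differentiableAt) (fun z _ ↦ ?_)
    (mem_univ y) (mem_univ x)
  rw [Real.fderiv_fourier hf hvf, ← integral_const_mul]
  refine (VectorFourier.norm_fourierIntegral_le_integral_norm _ _ _ _ _).trans ?_
  refine integral_mono_of_nonneg (ae_of_all _ fun v ↦ norm_nonneg _) (hvf.const_mul _) <|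
    ae_of_all _ fun v ↦ (VectorFourier.norm_fourierSMulRight_le _ _ _).trans ?_
  calc 2 * π * ‖innerSL ℝ (E := V)‖ * ‖v‖ * ‖f v‖ ≤ 2 * π * 1 * ‖v‖ * ‖f v‖ := by
        gcongr; exact norm_innerSL_le ℝ
    _ = 2 * π * (‖v‖ * ‖f v‖) := by ring

lemma norm_fourier_sub_le_of_ae_norm_le {f : V → E} (hf : Integrable f) {R : ℝ}
    (hfR : ∀ᵐ v, f v ≠ 0 → ‖v‖ ≤ R) (x y : V) :
    ‖𝓕 f x - 𝓕 f y‖ ≤ 2 * π * R * (∫ v, ‖f v‖) * ‖x - y‖ := by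
  have h_moment : ∀ᵐ v, ‖v‖ * ‖f v‖ ≤ R * ‖f v‖ := by
    filter_upwards [hfR] with v hv
    obtain h | h := eq_or_ne (f v) 0
    · simp [h]
    · gcongr; exact hv h
  have hvf : Integrable fun v ↦ ‖v‖ * ‖f v‖ :=
    (hf.norm.const_mul R).mono' (by fun_prop) (by simpa using h_moment)
  refine (norm_fourier_sub_le hf hvf x y).trans ?_
  rw [mul_assoc _ R, ← integral_const_mul R]
  have := integral_mono_ae hvf (hf.norm.const_mul R) h_moment
  gcongr

/-- The space cut-off `f ↦ 1_{|x| < R} f` from `L^p` to `L^q`, with the Hölder exponents of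
`truncation`: `∞ 2 2` gives the projection `L² → L²`, and `2 2 1` the same function seen in `L¹`. -/
def ballTruncation (r p q : ℝ≥0∞) [ENNReal.HolderTriple r p q] [Fact (1 ≤ r)] [Fact (1 ≤ p)]
    [Fact (1 ≤ q)] (R : ℝ) : Lp E p (volume : Measure V) →L[ℂ] Lp E q (volume : Measure V) :=
  truncation ℂ r p q (measurableSet_ball (x := (0 : V)) (ε := R)) measure_ball_lt_top.ne

lemma coeFn_ballTruncation (r p q : ℝ≥0∞) [ENNReal.HolderTriple r p q] [Fact (1 ≤ r)]
    [Fact (1 ≤ p)] [Fact (1 ≤ q)] (R : ℝ) (f : Lp E p (volume : Measure V)) :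
    ballTruncation r p q R f =ᵐ[volume] (ball 0 R).indicator f :=
  coeFn_truncation ℂ r p q _ _ f

lemma norm_ballTruncation_le (p : ℝ≥0∞) [Fact (1 ≤ p)] (R : ℝ) (f : Lp E p (volume : Measure V)) :
    ‖ballTruncation ∞ p p R f‖ ≤ ‖f‖ :=
  norm_truncation_le ℂ p _ _ f

lemma norm_sub_ballTruncation_sq (R : ℝ) (f : Lp E 2 (volume : Measure V)) :
    ‖f - ballTruncation ∞ 2 2 R f‖ ^ 2 = ∫ x in {x | R ≤ ‖x‖}, ‖f x‖ ^ 2 := by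
  have h_compl : (ball (0 : V) R)ᶜ = {x | R ≤ ‖x‖} := by ext; simp
  rw [← h_compl]
  exact norm_sub_truncation_sq ℂ _ _ f

lemma tendsto_sub_ballTruncation (f : Lp E 2 (volume : Measure V)) :
    Tendsto (fun R ↦ f - ballTruncation ∞ 2 2 R f) atTop (𝓝 0) := by
  have hf : Integrable fun x ↦ ‖f x‖ ^ 2 := (Lp.memLp f).integrable_norm_pow two_ne_zero
  refine tendsto_zero_iff_norm_tendsto_zero.2 ?_
  simpa [← norm_sub_ballTruncation_sq] using (tendsto_setIntegral_le_norm_atTop hf).sqrt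

lemma eventually_forall_setIntegral_norm_sq_lt {s : Set (Lp E 2 (volume : Measure V))}
    (hs : TotallyBounded s) {ε : ℝ} (hε : 0 < ε) :
    ∀ᶠ R in atTop, ∀ f ∈ s, (∫ x in {x | R ≤ ‖x‖}, ‖f x‖ ^ 2) < ε := by
  have h_bound (R : ℝ) :
      ‖ContinuousLinearMap.id ℂ (Lp E 2 (volume : Measure V)) - ballTruncation ∞ 2 2 R‖ ≤ 2 :=
    ContinuousLinearMap.opNorm_le_bound _ zero_le_two fun f ↦ calc
      ‖f - ballTruncation ∞ 2 2 R f‖ ≤ ‖f‖ + ‖ballTruncation ∞ 2 2 R f‖ := norm_sub_le _ _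
      _ ≤ 2 * ‖f‖ := by linarith [norm_ballTruncation_le 2 R f]
  filter_upwards [eventually_forall_norm_lt_of_totallyBounded h_bound tendsto_sub_ballTruncation hs
    (Real.sqrt_pos.2 hε)] with R hR f hf
  rw [← norm_sub_ballTruncation_sq]
  exact (Real.lt_sqrt (norm_nonneg _)).1 (hR f hf)

/-- The Fourier integral of `1_{|x| < R} f`, restricted to the frequencies `|ξ| ≤ R` and valued in
continuous functions, so that the Arzelà–Ascoli theorem applies to it. -/
def truncatedFourier (R : ℝ) :
    Lp E 2 (volume : Measure V) →L[ℂ] closedBall (0 : V) R →ᵇ E :=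
  BoundedContinuousFunction.compContinuousCLM E ℂ ((ContinuousMap.id V).restrict (closedBall 0 R))
    ∘L Lp.fourierTransformCLM V E ∘L ballTruncation 2 2 1 R

lemma truncatedFourier_apply (R : ℝ) (f : Lp E 2 (volume : Measure V)) (ξ : closedBall (0 : V) R) :
    truncatedFourier R f ξ = 𝓕 (ballTruncation 2 2 1 R f : V → E) ξ := by
  simp [truncatedFourier]

lemma dist_truncatedFourier_le (R : ℝ) (f : Lp E 2 (volume : Measure V))
    (ξ η : closedBall (0 : V) R) :
    dist (truncatedFourier R f ξ) (truncatedFourier R f η)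
      ≤ 2 * π * R * ‖ballTruncation 2 2 1 R f‖ * dist ξ η := by
  rw [Subtype.dist_eq, dist_eq_norm, dist_eq_norm (ξ : V), truncatedFourier_apply,
    truncatedFourier_apply, L1.norm_eq_integral_norm]
  refine norm_fourier_sub_le_of_ae_norm_le (L1.integrable_coeFn _) ?_ _ _
  filter_upwards [coeFn_ballTruncation 2 2 1 R f] with v hv hv₀
  rw [hv] at hv₀
  exact (mem_ball_zero_iff.1 (mem_of_indicator_ne_zero hv₀)).le

lemma isCompactOperator_truncatedFourier [FiniteDimensional ℂ E] (R : ℝ) :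
    IsCompactOperator (truncatedFourier R : Lp E 2 (volume : Measure V) →L[ℂ] _) := by
  have : ProperSpace E := FiniteDimensional.proper ℂ E
  have : CompactSpace (closedBall (0 : V) R) :=
    isCompact_iff_compactSpace.1 (isCompact_closedBall _ _)
  let P : Lp E 2 (volume : Measure V) →L[ℂ] Lp E 1 (volume : Measure V) := ballTruncation 2 2 1 R
  refine isCompactOperator_of_equicontinuous <| UniformEquicontinuous.equicontinuous <|
    LipschitzWith.uniformEquicontinuous _ (2 * π * R * ‖P‖).toNNReal ?_
  rintro ⟨_, f, hf, rfl⟩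
  refine LipschitzWith.of_dist_le_mul fun ξ η ↦ ?_
  have hR : 0 ≤ R := dist_nonneg.trans ξ.2
  refine (dist_truncatedFourier_le R f ξ η).trans ?_
  rw [Real.coe_toNNReal _ (by positivity)]
  gcongr
  exact P.unit_le_opNorm f (mem_closedBall_zero_iff.1 hf)

variable {T : Lp E 2 (volume : Measure V) →L[ℂ] Lp E 2 (volume : Measure V)}

lemma ae_eq_truncatedFourier
    (hT : ∀ f : Lp E 2 (volume : Measure V), Integrable f → T f =ᵐ[volume] 𝓕 (f : V → E))
    (R : ℝ) (f : Lp E 2 (volume : Measure V)) :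
    ∀ᵐ ξ, ∀ hξ : ξ ∈ closedBall (0 : V) R,
      T (ballTruncation ∞ 2 2 R f) ξ = truncatedFourier R f ⟨ξ, hξ⟩ := by
  have h_eq : ballTruncation ∞ 2 2 R f =ᵐ[volume] ballTruncation 2 2 1 R f :=
    (coeFn_ballTruncation ∞ 2 2 R f).trans (coeFn_ballTruncation 2 2 1 R f).symm
  filter_upwards [hT _ ((L1.integrable_coeFn _).congr h_eq.symm)] with ξ hTξ hξ
  rw [hTξ, truncatedFourier_apply, Real.fourier_congr_ae h_eq]

variable [FiniteDimensional ℂ E]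

lemma isCompactOperator_ballTruncation_comp_comp_ballTruncation
    (hT : ∀ f : Lp E 2 (volume : Measure V), Integrable f → T f =ᵐ[volume] 𝓕 (f : V → E)) (R : ℝ) :
    IsCompactOperator (ballTruncation ∞ 2 2 R ∘L T ∘L ballTruncation ∞ 2 2 R) := by
  have : CompleteSpace E := FiniteDimensional.complete ℂ E
  refine isCompactOperator_of_forall_norm_le (isCompactOperator_truncatedFourier R)
    (C := volume.real (ball (0 : V) R) ^ (1 / (2 : ℝ≥0∞).toReal)) fun f ↦ ?_
  rw [mul_comm]
  refine norm_truncation_le_of_ae_bound ℂ ∞ 2 2 measurableSet_ball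
    measure_ball_lt_top.ne (norm_nonneg _) ?_
  filter_upwards [ae_eq_truncatedFourier hT R f] with ξ hξ hξR
  have hξ' := hξ (ball_subset_closedBall hξR)
  simpa [hξ'] using (truncatedFourier R f).norm_coe_le_norm ⟨ξ, _⟩

lemma totallyBounded_image_of_setIntegral_norm_sq_lt
    (hT : ∀ f : Lp E 2 (volume : Measure V), Integrable f → T f =ᵐ[volume] 𝓕 (f : V → E))
    {s : Set (Lp E 2 (volume : Measure V))} (hs : Bornology.IsBounded s)
    (h : ∀ ε > 0, ∃ R, ∀ f ∈ s, (∫ x in {x | R ≤ ‖x‖}, ‖f x‖ ^ 2) < ε ∧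
      (∫ ξ in {ξ | R ≤ ‖ξ‖}, ‖T f ξ‖ ^ 2) < ε) :
    TotallyBounded (T '' s) := by
  refine totallyBounded_image_of_forall_exists_isCompactOperator (𝕜 := ℂ) hs T fun ε hε ↦ ?_
  obtain ⟨δ, hδ, hTδ⟩ : ∃ δ > 0, (1 + ‖T‖) * δ < ε := exists_pos_mul_lt hε _
  obtain ⟨R, hR⟩ := h (δ ^ 2) (by positivity)
  let P : Lp E 2 (volume : Measure V) →L[ℂ] Lp E 2 (volume : Measure V) := ballTruncation ∞ 2 2 R
  refine ⟨P ∘L T ∘L P, isCompactOperator_ballTruncation_comp_comp_ballTruncation hT R,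
    fun f hf ↦ ?_⟩
  obtain ⟨h_space, h_freq⟩ := hR f hf
  rw [← norm_sub_ballTruncation_sq] at h_space h_freq
  calc ‖T f - P (T (P f))‖ = ‖(T f - P (T f)) + P (T (f - P f))‖ := by
        rw [map_sub, map_sub, sub_add_sub_cancel]
    _ ≤ ‖T f - P (T f)‖ + ‖T (f - P f)‖ := (norm_add_le _ _).trans <| by
        gcongr; exact norm_ballTruncation_le 2 R _
    _ ≤ ‖T f - P (T f)‖ + ‖T‖ * ‖f - P f‖ := by gcongr; exact T.le_opNorm _
    _ ≤ δ + ‖T‖ * δ := by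
        gcongr
        exacts [(lt_of_pow_lt_pow_left₀ 2 hδ.le h_freq).le,
          (lt_of_pow_lt_pow_left₀ 2 hδ.le h_space).le]
    _ < ε := by linarith

theorem compactness_in_L2_general
    (T : Lp E 2 (volume : Measure V) ≃L[ℂ] Lp E 2 (volume : Measure V))
    (hT : ∀ f : Lp E 2 (volume : Measure V), Integrable f → T f =ᵐ[volume] 𝓕 (f : V → E))
    (F : Set (Lp E 2 (volume : Measure V))) :
    IsCompact (closure F) ↔ (∃ A > 0, ∀ f ∈ F, ‖f‖ ≤ A) ∧
      ∀ ε > 0, ∃ R > 0, ∀ f ∈ F,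
        (∫ x in {x | R ≤ ‖x‖}, ‖f x‖ ^ 2) + (∫ ξ in {ξ | R ≤ ‖ξ‖}, ‖T f ξ‖ ^ 2) < ε := by
  have : CompleteSpace E := FiniteDimensional.complete ℂ E
  rw [isCompact_closure_iff_totallyBounded]
  refine ⟨fun hF ↦ ⟨hF.isBounded.exists_pos_norm_le, fun ε hε ↦ ?_⟩,
    fun ⟨⟨A, _, hA⟩, h_tails⟩ ↦ ?_⟩
  · have hTF : TotallyBounded (T '' F) := hF.image T.toContinuousLinearMap.uniformContinuous
    obtain ⟨R, hR, h_space, h_freq⟩ := ((eventually_gt_atTop 0).and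
      ((eventually_forall_setIntegral_norm_sq_lt hF (half_pos hε)).and
        (eventually_forall_setIntegral_norm_sq_lt hTF (half_pos hε)))).exists
    refine ⟨R, hR, fun f hf ↦ ?_⟩
    linarith [h_space f hf, h_freq (T f) (mem_image_of_mem T hf)]
  · have hTF : TotallyBounded (T '' F) := by
      refine totallyBounded_image_of_setIntegral_norm_sq_lt (T := T) hT
        (isBounded_iff_forall_norm_le.2 ⟨A, hA⟩) fun ε hε ↦ ?_
      obtain ⟨R, _, hR⟩ := h_tails ε hε
      refine ⟨R, fun f hf ↦ ⟨?_, ?_⟩⟩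
      · exact (le_add_of_nonneg_right (by positivity)).trans_lt (hR f hf)
      · exact (le_add_of_nonneg_left (by positivity)).trans_lt (hR f hf)
    simpa [image_image] using hTF.image T.symm.toContinuousLinearMap.uniformContinuous

end Fourier

lemma fourier_euclideanSpace_eq {ι E : Type*} [Fintype ι] [NormedAddCommGroup E] [NormedSpace ℂ E]
    (f : EuclideanSpace ℝ ι → E) :
    𝓕 f = fun ξ ↦ ∫ x : EuclideanSpace ℝ ι,
      Complex.exp ((-(2 * π * ∑ j, x j * ξ j) : ℝ) * Complex.I) • f x := by
  ext ξ
  simp [Real.fourier_eq', PiLp.inner_apply, mul_comm (ξ _)]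

/-- compactness criterion in `L²(ℝ^d)` (Riesz–Kolmogorov via the Fourier
transform): given the unitary Fourier–Plancherel transform `T` on `L²(ℝ^d;ℂ)` (i.e. a
linear isometric equivalence agreeing a.e. with the Fourier integral on integrable
functions), a set `F ⊆ L²` has compact closure iff it is norm-bounded and has uniformly
small tails in space and frequency. -/
theorem compactness_in_L2 (d : ℕ) (hd : 1 ≤ d)
    (T : Lp ℂ 2 (volume : Measure (EuclideanSpace ℝ (Fin d)))
          ≃ₗᵢ[ℂ] Lp ℂ 2 (volume : Measure (EuclideanSpace ℝ (Fin d))))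
    (hT : ∀ f : Lp ℂ 2 (volume : Measure (EuclideanSpace ℝ (Fin d))),
      Integrable (⇑f) (volume : Measure (EuclideanSpace ℝ (Fin d))) →
      (⇑(T f) : EuclideanSpace ℝ (Fin d) → ℂ)
        =ᵐ[(volume : Measure (EuclideanSpace ℝ (Fin d)))]
          fun ξ => ∫ x : EuclideanSpace ℝ (Fin d),
            Complex.exp ((-(2 * Real.pi * ∑ j : Fin d, x j * ξ j) : ℝ) * Complex.I) * f x)
    (F : Set (Lp ℂ 2 (volume : Measure (EuclideanSpace ℝ (Fin d))))) :
    IsCompact (closure F) ↔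
      ((∃ A : ℝ, 0 < A ∧ ∀ f ∈ F, ‖f‖ ≤ A) ∧
        (∀ ε : ℝ, 0 < ε → ∃ R : ℝ, 0 < R ∧ ∀ f ∈ F,
          (∫ x in {x : EuclideanSpace ℝ (Fin d) | R ≤ ‖x‖}, ‖f x‖ ^ 2)
            + (∫ ξ in {ξ : EuclideanSpace ℝ (Fin d) | R ≤ ‖ξ‖}, ‖(T f) ξ‖ ^ 2) < ε)) :=
  compactness_in_L2_general T.toContinuousLinearEquiv
    (fun f hf ↦ (hT f hf).trans (.of_eq (fourier_euclideanSpace_eq f).symm)) F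
end
end

section
/- Let κ = 1/2 and let (u, v) be a classical solution of the quadratic NLS system on an open interval I. Let a ∈ C^∞(ℝ⁶; ℝ) be such that a and all its derivatives grow at most polynomially. Then for all t ∈ I, (d/dt) ∫_{ℝ⁶} (|u(t,x)|² + |v(t,x)|²) a(x) dx = Im ∫_{ℝ⁶} (2·conj(u)∇u + conj(v)∇v)·∇a(x) dx. -/
open MeasureTheory Real Filter

noncomputable section

/-!
Mass is locally transported: writing `ω(z, w) = Im(z̄ w)` for the area form of `ℂ`, the equations
give `∂ₜ(|u|² + |v|²) = -2 ω(u, Δu) - 2κ ω(v, Δv)`, the nonlinear contributions cancelling. The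
locally uniform Schwartz bounds dominate this derivative against the weight `a`, so it may be taken
under the integral sign. Integrating by parts moves one derivative from `Δu` onto `a ū`; since
`ω(∂ⱼu, ∂ⱼu) = 0`, only the term with `∂ⱼa` survives.
-/

section UniformDecay

variable {α E F G V : Type*} [NormedAddCommGroup E] [NormedAddCommGroup F]
  [NormedAddCommGroup G] [NormedAddCommGroup V] {K : Set α}

/-- The functions `f s`, `s ∈ K`, decay faster than any power of `‖x‖`, uniformly in `s`. No
regularity is included, so that the notion applies to densities as well as to solutions. -/
def UniformRapidDecay (K : Set α) (f : α → E → F) : Prop :=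
  ∀ k : ℕ, ∃ C : ℝ, ∀ s ∈ K, ∀ x, ‖x‖ ^ k * ‖f s x‖ ≤ C

namespace UniformRapidDecay

lemma add {f g : α → E → F} (hf : UniformRapidDecay K f) (hg : UniformRapidDecay K g) :
    UniformRapidDecay K (fun s x => f s x + g s x) := by
  intro k
  obtain ⟨C, hC⟩ := hf k
  obtain ⟨D, hD⟩ := hg k
  refine ⟨C + D, fun s hs x => ?_⟩
  calc ‖x‖ ^ k * ‖f s x + g s x‖ ≤ ‖x‖ ^ k * (‖f s x‖ + ‖g s x‖) := by
        gcongr; exact norm_add_le _ _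
    _ = ‖x‖ ^ k * ‖f s x‖ + ‖x‖ ^ k * ‖g s x‖ := mul_add _ _ _
    _ ≤ C + D := add_le_add (hC s hs x) (hD s hs x)

lemma bilin [NormedSpace ℝ F] [NormedSpace ℝ G] [NormedSpace ℝ V] (L : F →L[ℝ] G →L[ℝ] V)
    {f : α → E → F} {g : α → E → G} (hf : UniformRapidDecay K f) (hg : UniformRapidDecay K g) :
    UniformRapidDecay K (fun s x => L (f s x) (g s x)) := by
  intro k
  obtain ⟨C, hC⟩ := hf k
  obtain ⟨D, hD⟩ := hg 0
  refine ⟨‖L‖ * C * D, fun s hs x => ?_⟩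
  have hgD : ‖g s x‖ ≤ D := by simpa using hD s hs x
  have hC0 : 0 ≤ C := le_trans (by positivity) (hC s hs x)
  calc ‖x‖ ^ k * ‖L (f s x) (g s x)‖ ≤ ‖x‖ ^ k * (‖L‖ * ‖f s x‖ * ‖g s x‖) := by
        gcongr; exact L.le_opNorm₂ _ _
    _ = ‖L‖ * (‖x‖ ^ k * ‖f s x‖) * ‖g s x‖ := by ring
    _ ≤ ‖L‖ * C * D := by gcongr; exact hC s hs x

lemma temperate_smul [NormedSpace ℝ E] [NormedSpace ℝ F] {a : E → ℝ}
    (ha : a.HasTemperateGrowth) {f : α → E → F} (hf : UniformRapidDecay K f) :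
    UniformRapidDecay K (fun s x => a x • f s x) := by
  intro k
  obtain ⟨l, A, hA, hAa⟩ := ha.norm_iteratedFDeriv_le_uniform 0
  obtain ⟨C, hC⟩ := hf k
  obtain ⟨D, hD⟩ := hf (k + l)
  refine ⟨A * 2 ^ (l - 1) * (C + D), fun s hs x => ?_⟩
  have hax : ‖a x‖ ≤ A * (1 + ‖x‖) ^ l := by simpa using hAa 0 le_rfl x
  have hpow : (1 + ‖x‖) ^ l ≤ 2 ^ (l - 1) * (1 + ‖x‖ ^ l) := by
    simpa using add_pow_le zero_le_one (norm_nonneg x) l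
  calc ‖x‖ ^ k * ‖a x • f s x‖ = ‖x‖ ^ k * (‖a x‖ * ‖f s x‖) := by rw [norm_smul]
    _ ≤ ‖x‖ ^ k * (A * (2 ^ (l - 1) * (1 + ‖x‖ ^ l)) * ‖f s x‖) := by
        gcongr; exact hax.trans (by gcongr)
    _ = A * 2 ^ (l - 1) * (‖x‖ ^ k * ‖f s x‖ + ‖x‖ ^ (k + l) * ‖f s x‖) := by ring
    _ ≤ A * 2 ^ (l - 1) * (C + D) := by gcongr <;> [exact hC s hs x; exact hD s hs x]

lemma exists_integrable_bound [MeasurableSpace E] (μ : Measure E) [μ.HasTemperateGrowth]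
    {f : α → E → F} (hf : UniformRapidDecay K f) :
    ∃ b : E → ℝ, Integrable b μ ∧ ∀ s ∈ K, ∀ x, ‖f s x‖ ≤ b x := by
  obtain ⟨C, hC⟩ := hf 0
  obtain ⟨D, hD⟩ := hf μ.integrablePower
  refine ⟨fun x => 2 ^ μ.integrablePower * (C + D) * (1 + ‖x‖) ^ (-(μ.integrablePower : ℝ)),
    (Measure.integrable_pow_neg_integrablePower μ).const_mul _, fun s hs x => ?_⟩
  simpa using pow_mul_le_of_le_of_pow_mul_le (k := 0) (norm_nonneg x) (norm_nonneg (f s x))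
    (by simpa using hC s hs x) (by simpa using hD s hs x)

end UniformRapidDecay

theorem hasDerivAt_integral_of_uniformRapidDecay {𝕜 : Type*} [RCLike 𝕜] [NormedSpace ℝ V]
    [NormedSpace 𝕜 V] [MeasurableSpace E] {μ : Measure E} [μ.HasTemperateGrowth] {t : 𝕜}
    {K : Set 𝕜} (hK : K ∈ nhds t) {F F' : 𝕜 → E → V}
    (hF : ∀ s ∈ K, AEStronglyMeasurable (F s) μ) (hFt : Integrable (F t) μ)
    (hF't : AEStronglyMeasurable (F' t) μ) (hF' : UniformRapidDecay K F')
    (hderiv : ∀ s ∈ K, ∀ x, HasDerivAt (fun r => F r x) (F' s x) s) :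
    HasDerivAt (fun s => ∫ x, F s x ∂μ) (∫ x, F' t x ∂μ) t := by
  obtain ⟨b, hb, hF'b⟩ := hF'.exists_integrable_bound μ
  exact (hasDerivAt_integral_of_dominated_loc_of_deriv_le hK (eventually_of_mem hK hF) hFt hF't
    (ae_of_all _ fun x s hs => hF'b s hs x) hb (ae_of_all _ fun x s hs => hderiv s hs x)).2

end UniformDecay

section IntegrationByParts

open scoped SchwartzMap LineDeriv Laplacian

variable {E F G V : Type*} [NormedAddCommGroup E] [NormedAddCommGroup F] [NormedAddCommGroup G]
  [NormedAddCommGroup V] [NormedSpace ℝ F] [NormedSpace ℝ G] [NormedSpace ℝ V]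

lemma hasTemperateGrowth_fderiv [NormedSpace ℝ E] {f : E → F} (hf : f.HasTemperateGrowth) :
    (fderiv ℝ f).HasTemperateGrowth := by
  refine ⟨hf.1.fderiv_right (by simp), fun n => ?_⟩
  obtain ⟨k, C, hC⟩ := hf.2 (n + 1)
  exact ⟨k, C, fun x => by simpa only [norm_iteratedFDeriv_fderiv] using hC x⟩

lemma hasTemperateGrowth_fderiv_apply [NormedSpace ℝ E] {f : E → F} (hf : f.HasTemperateGrowth)
    (v : E) : (fun x => fderiv ℝ f x v).HasTemperateGrowth :=
  (ContinuousLinearMap.apply ℝ F v).hasTemperateGrowth.comp (hasTemperateGrowth_fderiv hf)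

lemma integrable_smul_bilin_schwartz [NormedSpace ℝ E] [MeasurableSpace E] [BorelSpace E]
    [SecondCountableTopology E] {μ : Measure E} [μ.HasTemperateGrowth] {a : E → ℝ}
    (ha : a.HasTemperateGrowth) (L : F →L[ℝ] G →L[ℝ] V) (f : 𝓢(E, F)) (g : 𝓢(E, G)) :
    Integrable (fun x => a x • L (f x) (g x)) μ := by
  refine (SchwartzMap.pairing L (SchwartzMap.smulLeftCLM F a f) g).integrable.congr ?_
  exact ae_of_all μ fun x => by
    simp [SchwartzMap.smulLeftCLM_apply_apply ha]

variable {L : F →L[ℝ] F →L[ℝ] V} {a : E → ℝ}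

/-- When the product rule hits `f`, it produces `L (∂ f) (∂ f) = 0`, so only the derivative of the
weight survives. -/
theorem integral_smul_lineDeriv_lineDeriv_of_self_eq_zero [NormedSpace ℝ E]
    [FiniteDimensional ℝ E] [MeasurableSpace E] [BorelSpace E] {μ : Measure E} [μ.IsAddHaarMeasure]
    (hL : ∀ z, L z z = 0) (ha : a.HasTemperateGrowth) (f : 𝓢(E, F)) (v : E) :
    ∫ x, a x • L (f x) (∂_{v} (∂_{v} f) x) ∂μ = -∫ x, fderiv ℝ a x v • L (f x) (∂_{v} f x) ∂μ := by
  have product_rule (x : E) : ∂_{v} (SchwartzMap.smulLeftCLM F a f) x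
      = a x • ∂_{v} f x + fderiv ℝ a x v • f x := by
    rw [SchwartzMap.lineDerivOp_apply_eq_fderiv, SchwartzMap.smulLeftCLM_apply ha,
      fderiv_fun_smul (ha.1.differentiable (by simp) x) f.differentiableAt]
    simp [SchwartzMap.lineDerivOp_apply_eq_fderiv]
  simpa [SchwartzMap.smulLeftCLM_apply_apply ha, product_rule, hL] using
    SchwartzMap.integral_bilinear_lineDerivOp_right_eq_neg_left (μ := μ)
      (SchwartzMap.smulLeftCLM F a f) (∂_{v} f) L v

theorem integral_smul_laplacian_of_self_eq_zero {ι : Type*} [Fintype ι] [InnerProductSpace ℝ E]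
    [FiniteDimensional ℝ E] [MeasurableSpace E] [BorelSpace E] {μ : Measure E} [μ.IsAddHaarMeasure]
    (hL : ∀ z, L z z = 0) (ha : a.HasTemperateGrowth) (f : 𝓢(E, F))
    (e : OrthonormalBasis ι ℝ E) :
    ∫ x, a x • L (f x) (Δ f x) ∂μ
      = -∫ x, ∑ i, fderiv ℝ a x (e i) • L (f x) (∂_{e i} f x) ∂μ := by
  simp only [SchwartzMap.laplacian_eq_sum e, sum_apply, map_sum, Finset.smul_sum]
  rw [integral_finsetSum _ fun i _ => integrable_smul_bilin_schwartz ha L f _,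
    integral_finsetSum _ fun i _ =>
      integrable_smul_bilin_schwartz (hasTemperateGrowth_fderiv_apply ha (e i)) L f _,
    ← Finset.sum_neg_distrib]
  exact Finset.sum_congr rfl fun i _ =>
    integral_smul_lineDeriv_lineDeriv_of_self_eq_zero hL ha f (e i)

lemma norm_laplacian_le [InnerProductSpace ℝ E] [FiniteDimensional ℝ E] (f : E → F) (x : E) :
    ‖Δ f x‖ ≤ Module.finrank ℝ E * ‖iteratedFDeriv ℝ 2 f x‖ := by
  have hterm (i) : ‖iteratedFDeriv ℝ 2 f x ![stdOrthonormalBasis ℝ E i, stdOrthonormalBasis ℝ E i]‖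
      ≤ ‖iteratedFDeriv ℝ 2 f x‖ := by
    simpa [Fin.prod_univ_two] using (iteratedFDeriv ℝ 2 f x).le_opNorm
      ![stdOrthonormalBasis ℝ E i, stdOrthonormalBasis ℝ E i]
  rw [InnerProductSpace.laplacian_eq_iteratedFDeriv_stdOrthonormalBasis]
  simpa using norm_sum_le_of_le Finset.univ fun i _ => hterm i

end IntegrationByParts

section SchwartzOnE6

open scoped SchwartzMap LineDeriv Laplacian ComplexConjugate

attribute [local instance] Complex.finrank_real_complex_fact

/-- The density `conj(f) ∇f · ∇a`, whose imaginary part is the mass current of `f` in the direction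
of `∇a`. -/
def currentDotGrad (a : E6 → ℝ) (f : E6 → ℂ) (x : E6) : ℂ :=
  ∑ j : Fin 6, conj (f x) * pd f j x * ((pdR a j x : ℝ) : ℂ)

namespace IsSchwartz

variable {f : E6 → ℂ} {a : E6 → ℝ}

/-- The Schwartz function `f`, bundled as an element of Mathlib's Schwartz space. -/
def toSchwartzMap (hf : IsSchwartz f) : 𝓢(E6, ℂ) := ⟨f, hf.1, hf.2⟩

@[simp]
lemma coe_toSchwartzMap (hf : IsSchwartz f) : ⇑hf.toSchwartzMap = f := rfl

lemma lineDeriv_toSchwartzMap_apply (hf : IsSchwartz f) (j : Fin 6) (x : E6) :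
    ∂_{EuclideanSpace.single j (1 : ℝ)} hf.toSchwartzMap x = pd f j x :=
  SchwartzMap.lineDerivOp_apply_eq_fderiv _ hf.toSchwartzMap x

lemma laplacian_toSchwartzMap_apply (hf : IsSchwartz f) (x : E6) :
    Δ hf.toSchwartzMap x = lap f x := by
  rw [SchwartzMap.laplacian_eq_sum (EuclideanSpace.basisFun (Fin 6) ℝ), sum_apply]
  refine Finset.sum_congr rfl fun j _ => ?_
  rw [EuclideanSpace.basisFun_apply, SchwartzMap.lineDerivOp_apply_eq_fderiv]
  exact congrArg (fun g => fderiv ℝ g x _) (funext (hf.lineDeriv_toSchwartzMap_apply j))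

lemma norm_lap_le (hf : IsSchwartz f) (x : E6) :
    ‖lap f x‖ ≤ 6 * ‖iteratedFDeriv ℝ 2 f x‖ := by
  rw [← hf.laplacian_toSchwartzMap_apply, SchwartzMap.laplacian_apply]
  simpa using norm_laplacian_le hf.toSchwartzMap x

lemma integrable_norm_sq_mul (hf : IsSchwartz f) (ha : a.HasTemperateGrowth) :
    Integrable fun x => ‖f x‖ ^ 2 * a x := by
  simpa [innerSL_apply_apply ℝ, real_inner_self_eq_norm_sq, mul_comm] using
    integrable_smul_bilin_schwartz (μ := volume) ha (innerSL ℝ) hf.toSchwartzMap hf.toSchwartzMap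

lemma integrable_mul_im_conj_mul_lap (hf : IsSchwartz f) (ha : a.HasTemperateGrowth) :
    Integrable fun x => a x * (conj (f x) * lap f x).im := by
  simpa [hf.laplacian_toSchwartzMap_apply, Orientation.areaForm'_apply, Complex.areaForm] using
    integrable_smul_bilin_schwartz (μ := volume) ha
      Complex.orientation.areaForm' hf.toSchwartzMap (Δ hf.toSchwartzMap)

lemma integrable_currentDotGrad (hf : IsSchwartz f) (ha : a.HasTemperateGrowth) :
    Integrable (currentDotGrad a f) := by
  refine integrable_finsetSum _ fun j _ => ?_
  simpa [hf.lineDeriv_toSchwartzMap_apply, mul_comm (conj _ * _), pdR] using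
    integrable_smul_bilin_schwartz (μ := volume)
      (hasTemperateGrowth_fderiv_apply ha (EuclideanSpace.single j 1))
      ((ContinuousLinearMap.mul ℝ ℂ).comp (Complex.conjCLE : ℂ →L[ℝ] ℂ)) hf.toSchwartzMap
      (∂_{EuclideanSpace.single j (1 : ℝ)} hf.toSchwartzMap)

theorem integral_mul_im_conj_mul_lap (hf : IsSchwartz f) (ha : a.HasTemperateGrowth) :
    ∫ x, a x * (conj (f x) * lap f x).im = -(∫ x, currentDotGrad a f x).im := by
  have by_parts := integral_smul_laplacian_of_self_eq_zero (μ := volume)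
    (L := Complex.orientation.areaForm') Complex.orientation.areaForm_apply_self ha
    hf.toSchwartzMap (EuclideanSpace.basisFun (Fin 6) ℝ)
  have im_current (x : E6) : (currentDotGrad a f x).im
      = ∑ j, pdR a j x * (conj (f x) * pd f j x).im := by
    simp only [currentDotGrad, Complex.im_sum, Complex.im_mul_ofReal, mul_comm (Complex.im _)]
  have im_integral :
      (∫ x, currentDotGrad a f x).im = ∫ x, (currentDotGrad a f x).im :=
    (integral_im (hf.integrable_currentDotGrad ha)).symm
  simp only [im_integral, im_current]
  simpa [hf.laplacian_toSchwartzMap_apply, hf.lineDeriv_toSchwartzMap_apply,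
    Orientation.areaForm'_apply, Complex.areaForm, pdR] using by_parts

end IsSchwartz

end SchwartzOnE6

section MassBalance

open scoped ComplexConjugate

/-- The nonlinear terms drop out since `Im(v ū²) + Im(v̄ u²) = 0`. -/
lemma inner_add_inner_of_eqn {κ : ℝ} {u v lapu lapv u' v' : ℂ}
    (hu : Complex.I * u' + lapu + v * conj u = 0)
    (hv : Complex.I * v' + (κ : ℂ) * lapv + u ^ 2 = 0) :
    inner ℝ u u' + inner ℝ v v' = -(conj u * lapu).im - κ * (conj v * lapv).im := by
  have hu' : u' = Complex.I * (lapu + v * conj u) := by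
    linear_combination (-Complex.I) * hu + u' * Complex.I_mul_I
  have hv' : v' = Complex.I * (κ * lapv + u ^ 2) := by
    linear_combination (-Complex.I) * hv + v' * Complex.I_mul_I
  rw [hu', hv', Complex.inner, Complex.inner]
  simp [pow_two]
  ring

/-- The time derivative of `(|u|² + |v|²) a` given by the equations. -/
def massDensityDeriv (κ : ℝ) (u v : E6 → ℂ) (a : E6 → ℝ) (x : E6) : ℝ :=
  -2 * (a x * (conj (u x) * lap u x).im) + -2 * κ * (a x * (conj (v x) * lap v x).im)

namespace IsClassicalSol

variable {κ : ℝ} {I : Set ℝ} {u v : ℝ → E6 → ℂ} {a : E6 → ℝ} {t : ℝ}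

lemma differentiableAt_u_v (hsol : IsClassicalSol κ I u v) (ht : I ∈ nhds t) (x : E6) :
    DifferentiableAt ℝ (fun s => u s x) t ∧ DifferentiableAt ℝ (fun s => v s x) t := by
  have huv : DifferentiableAt ℝ (fun p : ℝ × E6 => (u p.1 p.2, v p.1 p.2)) (t, x) :=
    (hsol.smooth.contDiffAt (prod_mem_nhds ht univ_mem)).differentiableAt (by simp)
  have slice : DifferentiableAt ℝ (fun s : ℝ => (s, x)) t := by fun_prop
  exact ⟨(huv.comp t slice).fst, (huv.comp t slice).snd⟩

theorem hasDerivAt_massDensity (hsol : IsClassicalSol κ I u v) (ht : I ∈ nhds t) (a : E6 → ℝ)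
    (x : E6) :
    HasDerivAt (fun s => (‖u s x‖ ^ 2 + ‖v s x‖ ^ 2) * a x)
      (massDensityDeriv κ (u t) (v t) a x) t := by
  obtain ⟨hu, hv⟩ := hsol.differentiableAt_u_v ht x
  have balance := inner_add_inner_of_eqn (hsol.eqn_u t (mem_of_mem_nhds ht) x)
    (hsol.eqn_v t (mem_of_mem_nhds ht) x)
  refine ((hu.hasDerivAt.norm_sq.fun_add hv.hasDerivAt.norm_sq).mul_const (a x)).congr_deriv ?_
  rw [massDensityDeriv]
  linear_combination 2 * a x * balance

lemma uniformRapidDecay (hsol : IsClassicalSol κ I u v) {K : Set ℝ} (hKI : K ⊆ I)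
    (hK : IsCompact K) : UniformRapidDecay K u ∧ UniformRapidDecay K v := by
  constructor <;> intro k <;> obtain ⟨C, hC⟩ := hsol.bounds K hKI hK k 0
  · exact ⟨C, fun s hs x => by simpa using (hC s hs x).1⟩
  · exact ⟨C, fun s hs x => by simpa using (hC s hs x).2⟩

lemma uniformRapidDecay_lap (hsol : IsClassicalSol κ I u v) {K : Set ℝ} (hKI : K ⊆ I)
    (hK : IsCompact K) :
    UniformRapidDecay K (fun s => lap (u s)) ∧ UniformRapidDecay K (fun s => lap (v s)) := by
  have lap_bound {f : E6 → ℂ} (hf : IsSchwartz f) {k : ℕ} {C : ℝ} {x : E6}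
      (hC : ‖x‖ ^ k * ‖iteratedFDeriv ℝ 2 f x‖ ≤ C) : ‖x‖ ^ k * ‖lap f x‖ ≤ 6 * C :=
    calc ‖x‖ ^ k * ‖lap f x‖ ≤ ‖x‖ ^ k * (6 * ‖iteratedFDeriv ℝ 2 f x‖) := by
          gcongr; exact hf.norm_lap_le x
      _ ≤ 6 * C := by linarith
  constructor <;> intro k <;> obtain ⟨C, hC⟩ := hsol.bounds K hKI hK k 2
  · exact ⟨6 * C, fun s hs x => lap_bound (hsol.schwartz_u s (hKI hs)) (hC s hs x).1⟩
  · exact ⟨6 * C, fun s hs x => lap_bound (hsol.schwartz_v s (hKI hs)) (hC s hs x).2⟩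

attribute [local instance] Complex.finrank_real_complex_fact in
lemma uniformRapidDecay_massDensityDeriv (hsol : IsClassicalSol κ I u v)
    (ha : a.HasTemperateGrowth) {K : Set ℝ} (hKI : K ⊆ I) (hK : IsCompact K) :
    UniformRapidDecay K (fun s => massDensityDeriv κ (u s) (v s) a) := by
  obtain ⟨hu, hv⟩ := hsol.uniformRapidDecay hKI hK
  obtain ⟨hlu, hlv⟩ := hsol.uniformRapidDecay_lap hKI hK
  have hω {f g : ℝ → E6 → ℂ} (hf : UniformRapidDecay K f) (hg : UniformRapidDecay K g) (c : ℝ) :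
      UniformRapidDecay K (fun s x => c * (a x * (conj (f s x) * g s x).im)) := by
    simpa [Orientation.areaForm'_apply, Complex.areaForm] using
      ((hf.bilin Complex.orientation.areaForm' hg).temperate_smul ha).temperate_smul
        (Function.HasTemperateGrowth.const c)
  exact (hω hu hlu (-2)).add (hω hv hlv (-2 * κ))

lemma integrable_massDensity (hsol : IsClassicalSol κ I u v) (ht : t ∈ I)
    (ha : a.HasTemperateGrowth) : Integrable fun x => (‖u t x‖ ^ 2 + ‖v t x‖ ^ 2) * a x := by
  simp only [add_mul]
  exact ((hsol.schwartz_u t ht).integrable_norm_sq_mul ha).add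
    ((hsol.schwartz_v t ht).integrable_norm_sq_mul ha)

lemma integrable_massDensityDeriv (hsol : IsClassicalSol κ I u v) (ht : t ∈ I)
    (ha : a.HasTemperateGrowth) : Integrable (massDensityDeriv κ (u t) (v t) a) :=
  (((hsol.schwartz_u t ht).integrable_mul_im_conj_mul_lap ha).const_mul _).add
    (((hsol.schwartz_v t ht).integrable_mul_im_conj_mul_lap ha).const_mul _)

theorem integral_massDensityDeriv (hsol : IsClassicalSol κ I u v) (ht : t ∈ I)
    (ha : a.HasTemperateGrowth) :
    ∫ x, massDensityDeriv κ (u t) (v t) a x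
      = (∫ x, (2 * currentDotGrad a (u t) x + 2 * κ * currentDotGrad a (v t) x)).im := by
  have hu := hsol.schwartz_u t ht
  have hv := hsol.schwartz_v t ht
  simp only [massDensityDeriv]
  rw [integral_add ((hu.integrable_mul_im_conj_mul_lap ha).const_mul _)
      ((hv.integrable_mul_im_conj_mul_lap ha).const_mul _),
    integral_add ((hu.integrable_currentDotGrad ha).const_mul _)
      ((hv.integrable_currentDotGrad ha).const_mul _)]
  simp only [integral_const_mul, hu.integral_mul_im_conj_mul_lap ha,
    hv.integral_mul_im_conj_mul_lap ha]
  simp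

end IsClassicalSol

theorem virial_first_general {κ : ℝ} {I : Set ℝ} {u v : ℝ → E6 → ℂ}
    (hsol : IsClassicalSol κ I u v) {a : E6 → ℝ} (ha : a.HasTemperateGrowth) {t : ℝ}
    (ht : I ∈ nhds t) :
    HasDerivAt (fun s => ∫ x : E6, (‖u s x‖ ^ 2 + ‖v s x‖ ^ 2) * a x)
      (∫ x : E6, ∑ j : Fin 6, (2 * conj (u t x) * pd (u t) j x
        + 2 * κ * conj (v t x) * pd (v t) j x) * ((pdR a j x : ℝ) : ℂ)).im t := by
  obtain ⟨K, hKt, hKI, hK⟩ := local_compact_nhds (interior_mem_nhds.2 ht)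
  have hKI' : K ⊆ I := hKI.trans interior_subset
  refine (hasDerivAt_integral_of_uniformRapidDecay hKt
    (fun s hs => (hsol.integrable_massDensity (hKI' hs) ha).aestronglyMeasurable)
    (hsol.integrable_massDensity (mem_of_mem_nhds ht) ha)
    (hsol.integrable_massDensityDeriv (mem_of_mem_nhds ht) ha).aestronglyMeasurable
    (hsol.uniformRapidDecay_massDensityDeriv ha hKI' hK)
    fun s hs => hsol.hasDerivAt_massDensity (mem_interior_iff_mem_nhds.1 (hKI hs)) a).congr_deriv ?_
  simp only [hsol.integral_massDensityDeriv (mem_of_mem_nhds ht) ha, currentDotGrad,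
    Finset.mul_sum, ← Finset.sum_add_distrib, add_mul, mul_assoc]

end MassBalance

/-- first Virial identity. For a classical solution of the mass-resonance
(`κ = 1/2`) quadratic NLS system and a smooth polynomially growing weight `a`,
`(d/dt) ∫ (|u|² + |v|²) a = Im ∫ (2 conj(u)∇u + conj(v)∇v)·∇a`. -/
theorem virial_first (I : Set ℝ) (hI : IsOpen I) (u v : ℝ → E6 → ℂ)
    (hsol : IsClassicalSol (1 / 2) I u v)
    (a : E6 → ℝ) (ha : Function.HasTemperateGrowth a) :
    ∀ t ∈ I,
      deriv (fun s => ∫ x : E6, (‖u s x‖ ^ 2 + ‖v s x‖ ^ 2) * a x) t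
        = (∫ x : E6, ∑ j : Fin 6,
            (2 * (starRingEnd ℂ) (u t x) * pd (u t) j x
              + (starRingEnd ℂ) (v t x) * pd (v t) j x) * ((pdR a j x : ℝ) : ℂ)).im := by
  intro t ht
  simpa using (virial_first_general hsol ha (hI.mem_nhds ht)).deriv
end
end

section
/- Let κ = 1/2, let u, v : ℝ⁶ → ℂ be Schwartz functions, and let ξ ∈ ℝ⁶. Define the Galilean transforms u^ξ(x) = e^{i x·ξ} u(x) and v^ξ(x) = e^{2i x·ξ} v(x). Then H(u^ξ, v^ξ) − H(u, v) = |ξ|²·M(u, v) + 2 ξ·P(u, v), where H(u,v) = ∫|∇u|² + (1/4)∫|∇v|², M(u,v) = ∫|u|² + ∫|v|², and P(u,v) = Im ∫ (conj(u)∇u + (1/2)conj(v)∇v) dx. -/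
open MeasureTheory Real Filter

noncomputable section

/-!
A boost by `ξ` turns each `∂ᵢ f` into `∂ᵢ f + i ξᵢ f`, up to a phase of modulus one. Expanding the
square produces the mass density times `|ξ|²` and the momentum density paired with `2 ξ`. The boost
of `v` is one by `2 ξ`, which multiplies these two terms by `4` and `2`; together with the weight
`κ / 2` of `∫ |∇v|²`, this gives `v` the weight `2 κ` in the mass term and `κ` in the momentum term.
They are the weights `1` and `1 / 2` of `M` and `P` precisely when `κ = 1 / 2`.
-/

section PointwiseIdentities

open Complex
open scoped ComplexConjugate

theorem norm_add_ofReal_mul_I_mul_sq (a b : ℂ) (t : ℝ) :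
    ‖a + t * I * b‖ ^ 2 = ‖a‖ ^ 2 + t ^ 2 * ‖b‖ ^ 2 + 2 * t * (conj b * a).im := by
  simp only [← normSq_eq_norm_sq, normSq_apply, add_re, add_im, mul_re, mul_im, conj_re, conj_im,
    ofReal_re, ofReal_im, I_re, I_im]
  ring

variable {E : Type*} [NormedAddCommGroup E] [NormedSpace ℝ E]
  {φ : E → ℝ} {f : E → ℂ} {x : E}

theorem fderiv_exp_ofReal_mul_I_mul_apply (hφ : DifferentiableAt ℝ φ x)
    (hf : DifferentiableAt ℝ f x) (h : E) :
    fderiv ℝ (fun y ↦ exp (φ y * I) * f y) x h =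
      exp (φ x * I) * (fderiv ℝ f x h + fderiv ℝ φ x h * I * f x) := by
  have hphase : HasFDerivAt (fun y ↦ exp (φ y * I))
      (exp (φ x * I) • (ofRealCLM.comp (fderiv ℝ φ x)).smulRight I) x :=
    ((ofRealCLM.hasFDerivAt.comp x hφ.hasFDerivAt).mul_const' I).cexp
  have hprod := DFunLike.congr_fun (hphase.mul hf.hasFDerivAt).fderiv h
  simp only [add_apply, smul_apply, ContinuousLinearMap.smulRight_apply,
    ContinuousLinearMap.comp_apply, ofRealCLM_apply, smul_eq_mul] at hprod
  exact hprod.trans (by ring)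

theorem norm_fderiv_exp_ofReal_mul_I_mul_apply_sq (hφ : DifferentiableAt ℝ φ x)
    (hf : DifferentiableAt ℝ f x) (h : E) :
    ‖fderiv ℝ (fun y ↦ exp (φ y * I) * f y) x h‖ ^ 2 =
      ‖fderiv ℝ f x h‖ ^ 2 + fderiv ℝ φ x h ^ 2 * ‖f x‖ ^ 2
        + 2 * fderiv ℝ φ x h * (conj (f x) * fderiv ℝ f x h).im := by
  rw [fderiv_exp_ofReal_mul_I_mul_apply hφ hf, norm_mul, norm_exp_ofReal_mul_I, one_mul,
    norm_add_ofReal_mul_I_mul_sq]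

end PointwiseIdentities

section ClassicalH1

open scoped ComplexConjugate

variable {E : Type*} [NormedAddCommGroup E] [NormedSpace ℝ E] [MeasurableSpace E]

/-- The wave functions of finite mass and finite kinetic energy: `H¹` functions, with the gradient
taken in the classical sense. -/
structure IsClassicalH1 (μ : Measure E) (f : E → ℂ) : Prop where
  differentiable : Differentiable ℝ f
  memLp : MemLp f 2 μ
  memLp_fderiv : MemLp (fderiv ℝ f) 2 μ

namespace IsClassicalH1

variable {μ : Measure E} {f : E → ℂ}

theorem memLp_fderiv_apply (hf : IsClassicalH1 μ f) (h : E) :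
    MemLp (fun x ↦ fderiv ℝ f x h) 2 μ :=
  (ContinuousLinearMap.apply ℝ ℂ h).comp_memLp' hf.memLp_fderiv

theorem integrable_norm_sq (hf : IsClassicalH1 μ f) : Integrable (fun x ↦ ‖f x‖ ^ 2) μ :=
  hf.memLp.integrable_norm_pow two_ne_zero

theorem integrable_norm_fderiv_apply_sq (hf : IsClassicalH1 μ f) (h : E) :
    Integrable (fun x ↦ ‖fderiv ℝ f x h‖ ^ 2) μ :=
  (hf.memLp_fderiv_apply h).integrable_norm_pow two_ne_zero

theorem integrable_conj_mul_fderiv_apply (hf : IsClassicalH1 μ f) (h : E) :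
    Integrable (fun x ↦ conj (f x) * fderiv ℝ f x h) μ :=
  hf.memLp.star.integrable_mul (hf.memLp_fderiv_apply h)

theorem integrable_im_conj_mul_fderiv_apply (hf : IsClassicalH1 μ f) (h : E) :
    Integrable (fun x ↦ (conj (f x) * fderiv ℝ f x h).im) μ :=
  (hf.integrable_conj_mul_fderiv_apply h).im

end IsClassicalH1

end ClassicalH1

section GalileanBoost

open scoped ComplexConjugate InnerProductSpace

/-- The Galilean boost `e^{i x·ξ} f` of a wave function at a fixed time. -/
def galileanBoost {E : Type*} [NormedAddCommGroup E] [InnerProductSpace ℝ E] (ξ : E) (f : E → ℂ) :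
    E → ℂ :=
  fun x ↦ Complex.exp (⟪ξ, x⟫_ℝ * Complex.I) * f x

theorem norm_fderiv_galileanBoost_apply_sq {E : Type*} [NormedAddCommGroup E]
    [InnerProductSpace ℝ E] {f : E → ℂ} {x : E} (hf : DifferentiableAt ℝ f x) (ξ h : E) :
    ‖fderiv ℝ (galileanBoost ξ f) x h‖ ^ 2 =
      ‖fderiv ℝ f x h‖ ^ 2 + ⟪ξ, h⟫_ℝ ^ 2 * ‖f x‖ ^ 2
        + 2 * ⟪ξ, h⟫_ℝ * (conj (f x) * fderiv ℝ f x h).im := by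
  unfold galileanBoost
  simpa only [ContinuousLinearMap.fderiv, innerSL_apply_apply] using
    norm_fderiv_exp_ofReal_mul_I_mul_apply_sq (innerSL ℝ ξ).differentiableAt hf h

variable {ι : Type*} [Fintype ι] [DecidableEq ι]

/-- The Dirichlet energy `∫ |∇f|² dμ`, with `|∇f|²` expanded in the standard coordinates. -/
def dirichletEnergy (μ : Measure (EuclideanSpace ℝ ι)) (f : EuclideanSpace ℝ ι → ℂ) : ℝ :=
  ∫ x, ∑ i, ‖fderiv ℝ f x (EuclideanSpace.single i 1)‖ ^ 2 ∂μ

/-- The momentum `Im ∫ conj(f) ∇f dμ` of a single wave function, as a vector. -/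
def momentum (μ : Measure (EuclideanSpace ℝ ι)) (f : EuclideanSpace ℝ ι → ℂ) :
    EuclideanSpace ℝ ι :=
  WithLp.toLp 2 fun i ↦ (∫ x, conj (f x) * fderiv ℝ f x (EuclideanSpace.single i 1) ∂μ).im

variable {μ : Measure (EuclideanSpace ℝ ι)} {f : EuclideanSpace ℝ ι → ℂ}

theorem sum_norm_fderiv_galileanBoost_sq {x : EuclideanSpace ℝ ι} (hf : DifferentiableAt ℝ f x)
    (ξ : EuclideanSpace ℝ ι) :
    ∑ i, ‖fderiv ℝ (galileanBoost ξ f) x (EuclideanSpace.single i 1)‖ ^ 2 =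
      ∑ i, ‖fderiv ℝ f x (EuclideanSpace.single i 1)‖ ^ 2 + ‖ξ‖ ^ 2 * ‖f x‖ ^ 2
        + 2 * ∑ i, ξ i * (conj (f x) * fderiv ℝ f x (EuclideanSpace.single i 1)).im := by
  have hpartial (i : ι) :=
    norm_fderiv_galileanBoost_apply_sq hf ξ (EuclideanSpace.single i 1)
  simp only [EuclideanSpace.inner_single_right, conj_trivial, one_mul] at hpartial
  simp only [hpartial, Finset.sum_add_distrib, EuclideanSpace.real_norm_sq_eq, Finset.sum_mul,
    Finset.mul_sum, mul_assoc]

theorem inner_momentum (hf : IsClassicalH1 μ f) (ξ : EuclideanSpace ℝ ι) :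
    ⟪ξ, momentum μ f⟫_ℝ =
      ∫ x, ∑ i, ξ i * (conj (f x) * fderiv ℝ f x (EuclideanSpace.single i 1)).im ∂μ := by
  rw [integral_finsetSum _ fun i _ ↦
    (hf.integrable_im_conj_mul_fderiv_apply _).const_mul (ξ i)]
  simp only [PiLp.inner_apply, RCLike.inner_apply', conj_trivial, momentum, integral_const_mul]
  exact Finset.sum_congr rfl fun i _ ↦
    congrArg (ξ i * ·) (integral_im (hf.integrable_conj_mul_fderiv_apply _)).symm

theorem dirichletEnergy_galileanBoost (hf : IsClassicalH1 μ f) (ξ : EuclideanSpace ℝ ι) :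
    dirichletEnergy μ (galileanBoost ξ f) =
      dirichletEnergy μ f + ‖ξ‖ ^ 2 * ∫ x, ‖f x‖ ^ 2 ∂μ + 2 * ⟪ξ, momentum μ f⟫_ℝ := by
  have hgrad : Integrable (fun x ↦ ∑ i, ‖fderiv ℝ f x (EuclideanSpace.single i 1)‖ ^ 2) μ :=
    integrable_finsetSum _ fun _ _ ↦ hf.integrable_norm_fderiv_apply_sq _
  have hmass : Integrable (fun x ↦ ‖ξ‖ ^ 2 * ‖f x‖ ^ 2) μ := hf.integrable_norm_sq.const_mul _
  have hmomentum : Integrable (fun x ↦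
      ∑ i, ξ i * (conj (f x) * fderiv ℝ f x (EuclideanSpace.single i 1)).im) μ :=
    integrable_finsetSum _ fun _ _ ↦ (hf.integrable_im_conj_mul_fderiv_apply _).const_mul _
  simp only [dirichletEnergy, sum_norm_fderiv_galileanBoost_sq (hf.differentiable _)]
  rw [integral_add (hgrad.fun_add hmass) (hmomentum.const_mul 2), integral_add hgrad hmass,
    integral_const_mul, integral_const_mul, inner_momentum hf]

theorem galilean_kinetic_identity_general {u v : EuclideanSpace ℝ ι → ℂ}
    (hu : IsClassicalH1 μ u) (hv : IsClassicalH1 μ v) (κ : ℝ) (ξ : EuclideanSpace ℝ ι) :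
    (dirichletEnergy μ (galileanBoost ξ u)
          + κ / 2 * dirichletEnergy μ (galileanBoost ((2 : ℝ) • ξ) v))
        - (dirichletEnergy μ u + κ / 2 * dirichletEnergy μ v) =
      ‖ξ‖ ^ 2 * (∫ x, ‖u x‖ ^ 2 ∂μ + 2 * κ * ∫ x, ‖v x‖ ^ 2 ∂μ)
        + 2 * ⟪ξ, momentum μ u + κ • momentum μ v⟫_ℝ := by
  rw [dirichletEnergy_galileanBoost hu, dirichletEnergy_galileanBoost hv, norm_smul,
    Real.norm_two, real_inner_smul_left, inner_add_right, real_inner_smul_right]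
  ring

end GalileanBoost

section SixDimensions

open scoped InnerProductSpace

variable {u v : E6 → ℂ}

theorem IsSchwartz.isClassicalH1 (hu : IsSchwartz u) : IsClassicalH1 volume u :=
  let F : SchwartzMap E6 ℂ := ⟨u, hu.1, hu.2⟩
  have hF' : MemLp (fderiv ℝ F) 2 volume := (SchwartzMap.fderivCLM ℝ E6 ℂ F).memLp 2 volume
  ⟨F.differentiable, F.memLp 2, hF'⟩

theorem Hen_eq_dirichletEnergy (κ : ℝ) (u v : E6 → ℂ) :
    Hen κ u v = dirichletEnergy volume u + κ / 2 * dirichletEnergy volume v :=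
  rfl

theorem sum_mul_Pmom_eq_inner_momentum (hu : IsClassicalH1 volume u)
    (hv : IsClassicalH1 volume v) (ξ : E6) :
    ∑ j, ξ j * Pmom u v j =
      ⟪ξ, momentum volume u + (1 / 2 : ℝ) • momentum volume v⟫_ℝ := by
  have hPmom (j : Fin 6) :
      Pmom u v j = momentum volume u j + 1 / 2 * momentum volume v j := by
    have hint_u := hu.integrable_conj_mul_fderiv_apply (EuclideanSpace.single j 1)
    have hint_v := hv.integrable_conj_mul_fderiv_apply (EuclideanSpace.single j 1)
    have hhalf : (1 / 2 : ℂ) = ((1 / 2 : ℝ) : ℂ) := by norm_num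
    simp only [Pmom, pd, momentum, mul_assoc, hhalf]
    rw [integral_add hint_u (hint_v.const_mul _), integral_const_mul, Complex.add_im,
      Complex.im_ofReal_mul]
  simp only [hPmom, PiLp.inner_apply, RCLike.inner_apply', conj_trivial, PiLp.add_apply,
    PiLp.smul_apply, smul_eq_mul]

theorem galileanBoost_eq_exp_sum (ξ : E6) (f : E6 → ℂ) :
    galileanBoost ξ f =
      fun x ↦ Complex.exp (Complex.I * ((∑ j : Fin 6, x j * ξ j : ℝ) : ℂ)) * f x := by
  ext x
  simp only [galileanBoost, PiLp.inner_apply, RCLike.inner_apply, conj_trivial, mul_comm]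

theorem galileanBoost_two_smul_eq_exp_sum (ξ : E6) (f : E6 → ℂ) :
    galileanBoost ((2 : ℝ) • ξ) f =
      fun x ↦ Complex.exp (2 * Complex.I * ((∑ j : Fin 6, x j * ξ j : ℝ) : ℂ)) * f x := by
  ext x
  rw [galileanBoost, real_inner_smul_left]
  simp only [PiLp.inner_apply, RCLike.inner_apply, conj_trivial, Complex.ofReal_mul,
    Complex.ofReal_ofNat, mul_right_comm]

end SixDimensions

/-- Galilean transform identity in the mass-resonance case `κ = 1/2`.
For Schwartz `u, v` and `ξ ∈ ℝ⁶`, with `u^ξ(x) = e^{i x·ξ} u(x)` and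
`v^ξ(x) = e^{2i x·ξ} v(x)`, one has
`H(u^ξ, v^ξ) − H(u,v) = |ξ|² M(u,v) + 2 ξ·P(u,v)`. -/
theorem galilean_kinetic_identity (u v : E6 → ℂ) (hu : IsSchwartz u) (hv : IsSchwartz v)
    (ξ : E6) :
    Hen (1 / 2)
        (fun x => Complex.exp (Complex.I * ((∑ j : Fin 6, x j * ξ j : ℝ) : ℂ)) * u x)
        (fun x => Complex.exp (2 * Complex.I * ((∑ j : Fin 6, x j * ξ j : ℝ) : ℂ)) * v x)
      - Hen (1 / 2) u v
      = ‖ξ‖ ^ 2 * Mass u v + 2 * ∑ j : Fin 6, ξ j * Pmom u v j := by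
  rw [sum_mul_Pmom_eq_inner_momentum hu.isClassicalH1 hv.isClassicalH1,
    ← galileanBoost_eq_exp_sum, ← galileanBoost_two_smul_eq_exp_sum]
  simpa [Hen_eq_dirichletEnergy, Mass] using
    galilean_kinetic_identity_general hu.isClassicalH1 hv.isClassicalH1 (1 / 2) ξ
end
end

section
/- Let κ > 0, let W = (φ₀, φ₀/√κ) with φ₀(x) = √κ(1+|x|²/24)⁻² be the explicit ground state, and set C_GN = 2/(3·H(W)^{1/2}). Let δ' ∈ (0,1), let C > 0, and let u, v : ℝ⁶ → ℂ be Schwartz functions satisfying R(u,v) ≤ C_GN·H(u,v)^{3/2}, |R(u,v)| ≤ C·H(u,v)^{3/2}, and H(u,v) ≤ (1 − δ')·H(W). Then the energy is trapped by the kinetic energy: (1/3)(1 + δ'')·H(u,v) ≤ E(u,v) ≤ (1 + C·((1−δ')H(W))^{1/2})·H(u,v), where δ'' = 2(1 − (1−δ')^{1/2}). -/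
open MeasureTheory Real Filter

noncomputable section

/-! Where `H ≤ a`, the superlinear power `H ^ (3/2)` is at most `√a * H`, so a bound of `±R` by
`c * H ^ (3/2)` becomes the linear bound `c * √a * H`. For the sharp constant and
`a = (1 - δ') * H(W)` the factors of `H(W)` cancel, leaving the slope `(2/3) * √(1 - δ') < 1`. -/

lemma rpow_le_rpow_sub_one_mul {x a p : ℝ} (hx : 0 ≤ x) (hxa : x ≤ a) (hp : 1 ≤ p) :
    x ^ p ≤ a ^ (p - 1) * x :=
  calc
    x ^ p = x ^ (p - 1) * x := by
      rw [← rpow_add_one' hx (by linarith), sub_add_cancel]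
    _ ≤ a ^ (p - 1) * x := by gcongr

lemma rpow_three_halves_le_sqrt_mul {x a : ℝ} (hx : 0 ≤ x) (hxa : x ≤ a) :
    x ^ (3 / 2 : ℝ) ≤ √a * x := by
  have h := rpow_le_rpow_sub_one_mul hx hxa (p := 3 / 2) (by norm_num)
  rwa [show (3 / 2 - 1 : ℝ) = 1 / 2 by norm_num, ← sqrt_eq_rpow] at h

lemma gradNormSq_nonneg (f : E6 → ℂ) (x : E6) : 0 ≤ gradNormSq f x :=
  Finset.sum_nonneg fun _ _ => sq_nonneg _

lemma hen_nonneg {κ : ℝ} (hκ : 0 ≤ κ) (u v : E6 → ℂ) : 0 ≤ Hen κ u v :=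
  add_nonneg (integral_nonneg (gradNormSq_nonneg u))
    (mul_nonneg (by positivity) (integral_nonneg (gradNormSq_nonneg v)))

section EnergyBounds

variable {κ a c : ℝ} {u v : E6 → ℂ}

lemma mul_hen_rpow_three_halves_le (hκ : 0 ≤ κ) (hc : 0 ≤ c) (hH : Hen κ u v ≤ a) :
    c * Hen κ u v ^ (3 / 2 : ℝ) ≤ c * √a * Hen κ u v := by
  rw [mul_assoc]
  exact mul_le_mul_of_nonneg_left (rpow_three_halves_le_sqrt_mul (hen_nonneg hκ u v) hH) hc

lemma mul_hen_le_een (hκ : 0 ≤ κ) (hc : 0 ≤ c) (hH : Hen κ u v ≤ a)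
    (hR : Ren u v ≤ c * Hen κ u v ^ (3 / 2 : ℝ)) :
    (1 - c * √a) * Hen κ u v ≤ Een κ u v := by
  have hlin : Ren u v ≤ c * √a * Hen κ u v := hR.trans (mul_hen_rpow_three_halves_le hκ hc hH)
  rw [Een]
  linarith

lemma een_le_mul_hen (hκ : 0 ≤ κ) (hc : 0 ≤ c) (hH : Hen κ u v ≤ a)
    (hR : -Ren u v ≤ c * Hen κ u v ^ (3 / 2 : ℝ)) :
    Een κ u v ≤ (1 + c * √a) * Hen κ u v := by
  have hlin : -Ren u v ≤ c * √a * Hen κ u v := hR.trans (mul_hen_rpow_three_halves_le hκ hc hH)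
  rw [Een]
  linarith

end EnergyBounds

-- Only an inequality, because the left-hand side is `0` when `w ≤ 0`.
lemma two_div_three_mul_sqrt_mul_sqrt_mul_le {t : ℝ} (ht : 0 ≤ t) (w : ℝ) :
    2 / (3 * √w) * √(t * w) ≤ 2 / 3 * √t :=
  calc
    2 / (3 * √w) * √(t * w) = 2 / 3 * √t * (√w / √w) := by rw [sqrt_mul ht]; ring
    _ ≤ 2 / 3 * √t := mul_le_of_le_one_right (by positivity) (div_self_le_one _)

theorem energy_trapping_general {κ δ' C w : ℝ} {u v : E6 → ℂ} (hκ : 0 ≤ κ) (hδ' : δ' ≤ 1)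
    (hC : 0 ≤ C) (hGN : Ren u v ≤ 2 / (3 * √w) * Hen κ u v ^ (3 / 2 : ℝ))
    (hR : -Ren u v ≤ C * Hen κ u v ^ (3 / 2 : ℝ)) (hH : Hen κ u v ≤ (1 - δ') * w) :
    1 / 3 * (1 + 2 * (1 - √(1 - δ'))) * Hen κ u v ≤ Een κ u v ∧
    Een κ u v ≤ (1 + C * √((1 - δ') * w)) * Hen κ u v := by
  refine ⟨?_, een_le_mul_hen hκ hC hH hR⟩
  have hslope : 2 / (3 * √w) * √((1 - δ') * w) ≤ 2 / 3 * √(1 - δ') :=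
    two_div_three_mul_sqrt_mul_sqrt_mul_le (sub_nonneg.mpr hδ') w
  calc
    1 / 3 * (1 + 2 * (1 - √(1 - δ'))) * Hen κ u v
      ≤ (1 - 2 / (3 * √w) * √((1 - δ') * w)) * Hen κ u v :=
        mul_le_mul_of_nonneg_right (by linarith) (hen_nonneg hκ u v)
    _ ≤ Een κ u v := mul_hen_le_een hκ (by positivity) hH hGN

/-- energy trapping. If `u, v` are Schwartz satisfying the sharp
Gagliardo–Nirenberg bound `R(u,v) ≤ C_GN H(u,v)^{3/2}` with `C_GN = 2/(3 H(W)^{1/2})`,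
the bound `|R(u,v)| ≤ C H(u,v)^{3/2}`, and `H(u,v) ≤ (1 − δ') H(W)`, then
`(1/3)(1 + δ'') H(u,v) ≤ E(u,v) ≤ (1 + C ((1 − δ') H(W))^{1/2}) H(u,v)`,
where `δ'' = 2(1 − (1 − δ')^{1/2})`. -/
theorem energy_trapping (κ : ℝ) (hκ : 0 < κ) (δ' : ℝ) (hδ'0 : 0 < δ') (hδ'1 : δ' < 1)
    (C : ℝ) (hC : 0 < C)
    (u v : E6 → ℂ) (hu : IsSchwartz u) (hv : IsSchwartz v)
    (hGN : Ren u v ≤ (2 / (3 * Real.sqrt (Hen κ (W1 κ) (W2 κ)))) * (Hen κ u v) ^ (3 / 2 : ℝ))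
    (habs : |Ren u v| ≤ C * (Hen κ u v) ^ (3 / 2 : ℝ))
    (hH : Hen κ u v ≤ (1 - δ') * Hen κ (W1 κ) (W2 κ)) :
    (1 / 3) * (1 + 2 * (1 - Real.sqrt (1 - δ'))) * Hen κ u v ≤ Een κ u v ∧
    Een κ u v ≤ (1 + C * Real.sqrt ((1 - δ') * Hen κ (W1 κ) (W2 κ))) * Hen κ u v :=
  energy_trapping_general hκ.le hδ'1.le hC.le hGN ((neg_le_abs _).trans habs) hH
end
end
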